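/- arXiv:2603.22098 — 6 statements merged into one kernel-verified Lean document; each statement's English description precedes it below -/
import Mathlib

section
/- For every finite family S of nonempty compact subsets of ℝ², each of which is contained in [0,1]² after some translation, let OPT_t(S) denote the minimum number m of unit bins admitting a translational packing of S (an assignment of each set to one of m bins together with a translation vector such that each translate is contained in [0,1]² and translates assigned to the same bin have pairwise disjoint interiors), and let OPT_r(S) denote the analogous minimum when each set may first be rotated by a multiple of 90° about the origin and then translated. Then OPT_r(S) ≤ OPT_t(S) ≤ 4·OPT_r(S). -/
/-!
A translational packing is a rotational packing with no rotations, which gives the first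
inequality. For the second, split every bin of an optimal rotational packing into four, according
to the rotation class modulo 4 of the items. All items in one of the new bins were rotated by the
same `90° * r`; rotating that whole bin about its centre by `90° * 3r` (`binRot`) maps the bin to
itself, keeps interiors disjoint, and turns every item into a translate of its original, because
`rot90` has order 4.
-/

/-- Translate a set in the plane by a vector. -/
def planeTranslate (v : ℝ × ℝ) (S : Set (ℝ × ℝ)) : Set (ℝ × ℝ) := (· + v) '' S

/-- The unit bin `[0,1]²`. -/
def unitBin : Set (ℝ × ℝ) := Set.Icc ((0, 0) : ℝ × ℝ) (1, 1)

/-- Rotation by 90 degrees about the origin. -/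
def rot90 (p : ℝ × ℝ) : ℝ × ℝ := (-p.2, p.1)

/-- A translational packing of the family `S` into `m` unit bins: every item gets a bin index
`< m` and a translation vector, the translates lie in the bin, and translates sharing a bin
have pairwise disjoint interiors. -/
def PacksT {n : ℕ} (S : Fin n → Set (ℝ × ℝ)) (m : ℕ) : Prop :=
  ∃ (bin : Fin n → ℕ) (v : Fin n → ℝ × ℝ),
    (∀ i, bin i < m) ∧
    (∀ i, planeTranslate (v i) (S i) ⊆ unitBin) ∧
    ∀ i j, i ≠ j → bin i = bin j →
      Disjoint (interior (planeTranslate (v i) (S i))) (interior (planeTranslate (v j) (S j)))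

/-- A packing of the family `S` into `m` unit bins where each item may first be rotated by a
multiple of 90 degrees about the origin and then translated. -/
def PacksR {n : ℕ} (S : Fin n → Set (ℝ × ℝ)) (m : ℕ) : Prop :=
  ∃ (bin : Fin n → ℕ) (rot : Fin n → ℕ) (v : Fin n → ℝ × ℝ),
    (∀ i, bin i < m) ∧
    (∀ i, planeTranslate (v i) (rot90^[rot i] '' S i) ⊆ unitBin) ∧
    ∀ i j, i ≠ j → bin i = bin j →
      Disjoint (interior (planeTranslate (v i) (rot90^[rot i] '' S i)))
               (interior (planeTranslate (v j) (rot90^[rot j] '' S j)))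

/-- Minimum number of bins for a translational packing. -/
noncomputable def OPTt {n : ℕ} (S : Fin n → Set (ℝ × ℝ)) : ℕ := sInf {m | PacksT S m}

/-- Minimum number of bins for a packing with rotations by multiples of 90 degrees. -/
noncomputable def OPTr {n : ℕ} (S : Fin n → Set (ℝ × ℝ)) : ℕ := sInf {m | PacksR S m}

/-- Rotation by 90 degrees about the centre of the unit bin. -/
def binRot : (ℝ × ℝ) ≃ₜ (ℝ × ℝ) where
  toFun p := (1 - p.2, p.1)
  invFun p := (p.2, 1 - p.1)
  left_inv p := by simp
  right_inv p := by simp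
  continuous_toFun := by fun_prop
  continuous_invFun := by fun_prop

lemma binRot_add (p v : ℝ × ℝ) : binRot (p + v) = rot90 p + binRot v := by
  ext <;> simp [binRot, rot90] <;> ring

lemma binRot_iterate_add (k : ℕ) (p v : ℝ × ℝ) :
    binRot^[k] (p + v) = rot90^[k] p + binRot^[k] v := by
  induction k generalizing p v with
  | zero => rfl
  | succ k ih => rw [Function.iterate_succ_apply, binRot_add, ih,
      ← Function.iterate_succ_apply, ← Function.iterate_succ_apply]

lemma binRot_mem {p : ℝ × ℝ} (hp : p ∈ unitBin) : binRot p ∈ unitBin := by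
  obtain ⟨⟨h1, h2⟩, h3, h4⟩ := hp
  simp only at h1 h2 h3 h4
  refine ⟨⟨?_, ?_⟩, ?_, ?_⟩ <;> simp [binRot] <;> assumption

lemma binRot_iterate_mem (k : ℕ) {p : ℝ × ℝ} (hp : p ∈ unitBin) : binRot^[k] p ∈ unitBin := by
  induction k with
  | zero => exact hp
  | succ k ih => rw [Function.iterate_succ_apply']; exact binRot_mem ih

lemma disjoint_interior_binRot (k : ℕ) {A B : Set (ℝ × ℝ)}
    (h : Disjoint (interior A) (interior B)) :
    Disjoint (interior (binRot^[k] '' A)) (interior (binRot^[k] '' B)) := by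
  induction k with
  | zero => simpa using h
  | succ k ih =>
    rw [Function.iterate_succ', Set.image_comp, Set.image_comp, ← binRot.image_interior,
      ← binRot.image_interior]
    exact (Set.disjoint_image_iff binRot.injective).2 ih

lemma rot90_iterate_four_mul (k : ℕ) (p : ℝ × ℝ) : rot90^[4 * k] p = p := by
  have h : rot90^[4] = id := by funext p; simp [rot90]
  rw [Function.iterate_mul, h, Function.iterate_id, id]

/-- Rotating the bin by three times the rotation class of an item undoes the item's rotation. -/
lemma binRot_image_item (r : ℕ) (v : ℝ × ℝ) (T : Set (ℝ × ℝ)) :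
    binRot^[3 * (r % 4)] '' planeTranslate v (rot90^[r] '' T) =
      planeTranslate (binRot^[3 * (r % 4)] v) T := by
  unfold planeTranslate
  rw [Set.image_image, Set.image_image]
  refine Set.image_congr fun p _ => ?_
  rw [binRot_iterate_add, ← Function.iterate_add_apply,
    show 3 * (r % 4) + r = 4 * (r % 4 + r / 4) by omega, rot90_iterate_four_mul]

lemma PacksT.packsR {n : ℕ} {S : Fin n → Set (ℝ × ℝ)} {m : ℕ} (h : PacksT S m) :
    PacksR S m := by
  obtain ⟨bin, v, h1, h2, h3⟩ := h
  exact ⟨bin, fun _ => 0, v, h1, by simpa using h2, by simpa using h3⟩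

lemma PacksR.packsT {n : ℕ} {S : Fin n → Set (ℝ × ℝ)} {m : ℕ} (h : PacksR S m) :
    PacksT S (4 * m) := by
  obtain ⟨bin, rot, v, h1, h2, h3⟩ := h
  refine ⟨fun i => 4 * bin i + rot i % 4, fun i => binRot^[3 * (rot i % 4)] (v i),
    fun i => ?_, fun i => ?_, fun i j hij hb => ?_⟩
  · have := h1 i
    dsimp only
    omega
  · rw [← binRot_image_item]
    rintro _ ⟨p, hp, rfl⟩
    exact binRot_iterate_mem _ (h2 i hp)
  · dsimp only at hb ⊢
    have hbin : bin i = bin j := by omega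
    have hrot : rot i % 4 = rot j % 4 := by omega
    rw [← binRot_image_item, ← binRot_image_item, hrot]
    exact disjoint_interior_binRot _ (h3 i j hij hbin)

/-- One bin per item: the sets of feasible bin numbers are nonempty, so that the infima in
`OPTt` and `OPTr` are attained. -/
lemma packsT_card {n : ℕ} {S : Fin n → Set (ℝ × ℝ)}
    (hfit : ∀ i, ∃ v : ℝ × ℝ, planeTranslate v (S i) ⊆ unitBin) : PacksT S n := by
  choose v hv using hfit
  exact ⟨fun i => i, v, fun i => i.2, hv, fun i j hij h => absurd (Fin.ext h) hij⟩

/-- for every finite family of nonempty compact planar sets, each of which fits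
into the unit bin after some translation, `OPT_r ≤ OPT_t ≤ 4 · OPT_r`. -/
theorem stmt0 (n : ℕ) (S : Fin n → Set (ℝ × ℝ))
    (hne : ∀ i, (S i).Nonempty) (hcpt : ∀ i, IsCompact (S i))
    (hfit : ∀ i, ∃ v : ℝ × ℝ, planeTranslate v (S i) ⊆ unitBin) :
    OPTr S ≤ OPTt S ∧ OPTt S ≤ 4 * OPTr S := by
  have hT : PacksT S n := packsT_card hfit
  have hOt : PacksT S (OPTt S) := Nat.sInf_mem (s := {m | PacksT S m}) ⟨n, hT⟩
  have hOr : PacksR S (OPTr S) := Nat.sInf_mem (s := {m | PacksR S m}) ⟨n, hT.packsR⟩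
  exact ⟨Nat.sInf_le hOt.packsR, Nat.sInf_le hOr.packsT⟩
end

section
/- For every integer k ≥ 1, every deterministic online algorithm for BinSorting[k], and every integer n ≥ 1, there exists a sequence of n distinct numbers from {1, …, 2^n − 1} on which the algorithm uses at least ⌈n / ⌊log₂(k+1)⌋⌉ arrays; moreover, any n distinct natural numbers admit a valid offline assignment using only ⌈n/k⌉ arrays. In particular, for k = n every deterministic online algorithm for BinSorting[n] uses at least n/⌊log₂(n+1)⌋ arrays on some sequence of n distinct numbers whose offline optimum is one array. -/
/-!
Lower bound: the adversary plays binary search. It keeps an open interval, initially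
`(0, 2 ^ n)`, that contains no number presented so far, and presents its midpoint `m`. For each
array `j` it records slots `lo j < hi j` which, by validity, strictly enclose the slot of every
future number of the interval placed in array `j`; initially these are `0` and `k + 1`. When `m`
goes to slot `s` of array `j`, one of `s - lo j` and `hi j - s` is at most half of `hi j - lo j`,
and the adversary continues in the corresponding half of its interval. Hence
`(hi j - lo j) * 2 ^ c ≤ k + 1` once array `j` has received `c` numbers, so `c ≤ log₂ (k + 1)`, and
`n` numbers need at least `n / ⌊log₂ (k + 1)⌋` arrays. The invariant is `AdversaryInv`; it is
maintained by `AdversaryInv.step`.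

Upper bound: the number of rank `r` (counted from `0`) goes to slot `r % k + 1` of array `r / k`.
-/

/-- A valid BinSorting[k] assignment of the numbers `σ` : each number gets an (array, slot)
pair with slot in `{1,…,k}`, no (array, slot) pair is used twice, and within each array the
assigned numbers are strictly increasing in the slot index. -/
def ValidAssign (k : ℕ) {n : ℕ} (σ : Fin n → ℕ) (f : Fin n → ℕ × ℕ) : Prop :=
  (∀ i, 1 ≤ (f i).2 ∧ (f i).2 ≤ k) ∧
  Function.Injective f ∧
  ∀ i j, (f i).1 = (f j).1 → (f i).2 < (f j).2 → σ i < σ j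

/-- The assignment induced by a deterministic online algorithm `A` on the sequence `σ`:
the decision for the `i`-th number depends only on the first `i+1` numbers. -/
def inducedAssign (A : List ℕ → ℕ × ℕ) {n : ℕ} (σ : Fin n → ℕ) : Fin n → ℕ × ℕ :=
  fun i => A ((List.ofFn σ).take (i.1 + 1))

/-- The number of arrays used by an assignment. -/
def arraysUsed {n : ℕ} (f : Fin n → ℕ × ℕ) : ℕ :=
  ((Finset.univ : Finset (Fin n)).image fun i => (f i).1).card

/-- `A` is a deterministic online algorithm for BinSorting[k]: on every finite sequence of
distinct natural numbers the overall assignment it produces is valid (hence it is valid at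
every step, by restriction to prefixes). -/
def IsOnlineBinSorting (k : ℕ) (A : List ℕ → ℕ × ℕ) : Prop :=
  ∀ (n : ℕ) (σ : Fin n → ℕ), Function.Injective σ → ValidAssign k σ (inducedAssign A σ)

/-- The (array, slot) pair given by `A` to the number with index `i` of the infinite sequence
`x`. -/
def place (A : List ℕ → ℕ × ℕ) (x : ℕ → ℕ) (i : ℕ) : ℕ × ℕ :=
  A ((List.range (i + 1)).map x)

theorem inducedAssign_eq_place (A : List ℕ → ℕ × ℕ) (x : ℕ → ℕ) (n : ℕ) (i : Fin n) :
    inducedAssign A (fun t : Fin n => x t) i = place A x i := by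
  unfold inducedAssign place
  congr 1
  apply List.ext_getElem
  · simp
  · intro t h1 h2
    simp

theorem place_congr (A : List ℕ → ℕ × ℕ) (x y : ℕ → ℕ) (i : ℕ) (h : ∀ t ≤ i, x t = y t) :
    place A x i = place A y i := by
  unfold place
  congr 1
  apply List.map_congr_left
  intro t ht
  exact h t (by simpa [Nat.lt_succ_iff] using ht)

/-- The number of indices below `i` whose number `A` puts in array `j`. -/
def arrayCount (A : List ℕ → ℕ × ℕ) (x : ℕ → ℕ) (i j : ℕ) : ℕ :=
  ((Finset.range i).filter fun t => (place A x t).1 = j).card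

theorem arrayCount_congr (A : List ℕ → ℕ × ℕ) (x y : ℕ → ℕ) (i j : ℕ)
    (h : ∀ t < i, x t = y t) : arrayCount A x i j = arrayCount A y i j := by
  unfold arrayCount
  congr 1
  apply Finset.filter_congr
  intro t ht
  rw [place_congr A x y t fun s hs => h s (by have := Finset.mem_range.1 ht; omega)]

theorem arrayCount_succ (A : List ℕ → ℕ × ℕ) (x : ℕ → ℕ) (i j : ℕ) :
    arrayCount A x (i + 1) j =
      arrayCount A x i j + if (place A x i).1 = j then 1 else 0 := by
  unfold arrayCount
  rw [Finset.range_add_one, Finset.filter_insert]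
  split_ifs <;> simp

/-- The adversary's invariant after presenting `x 0, …, x (i - 1)`. The current interval is
`(a, a + 2 ^ (n - i))`. In array `j`, `lo j` is `0` or the slot of a number left of the interval,
`hi j` is `k + 1` or the slot of a number right of it, and each number put in array `j` has at least halved
`hi j - lo j`. -/
structure AdversaryInv (k n : ℕ) (A : List ℕ → ℕ × ℕ) (i : ℕ) (x : ℕ → ℕ) (a : ℕ)
    (lo hi : ℕ → ℕ) : Prop where
  inj : ∀ s < i, ∀ t < i, x s = x t → s = t
  mem : ∀ t < i, 1 ≤ x t ∧ x t < 2 ^ n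
  bound : a + 2 ^ (n - i) ≤ 2 ^ n
  outside : ∀ t < i, x t ≤ a ∨ a + 2 ^ (n - i) ≤ x t
  lo_lt_hi : ∀ j, lo j < hi j
  width : ∀ j, (hi j - lo j) * 2 ^ arrayCount A x i j ≤ k + 1
  lo_spec : ∀ j, lo j = 0 ∨ ∃ t < i, place A x t = (j, lo j) ∧ x t ≤ a
  hi_spec : ∀ j, hi j = k + 1 ∨ ∃ t < i, place A x t = (j, hi j) ∧ a + 2 ^ (n - i) ≤ x t

theorem AdversaryInv.start (k n : ℕ) (A : List ℕ → ℕ × ℕ) :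
    AdversaryInv k n A 0 (fun _ => 0) 0 (fun _ => 0) (fun _ => k + 1) where
  inj := by simp
  mem := by simp
  bound := by simp
  outside := by simp
  lo_lt_hi := by simp
  width := by simp [arrayCount]
  lo_spec := by simp
  hi_spec := by simp

/-- Validity of `A` on the first `i` terms of `x`, stated for `place`. -/
theorem IsOnlineBinSorting.place_valid {k : ℕ} {A : List ℕ → ℕ × ℕ}
    (hA : IsOnlineBinSorting k A) {i : ℕ} {x : ℕ → ℕ}
    (hx : ∀ s < i, ∀ t < i, x s = x t → s = t) :
    (∀ t < i, 1 ≤ (place A x t).2 ∧ (place A x t).2 ≤ k) ∧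
    (∀ s < i, ∀ t < i, place A x s = place A x t → s = t) ∧
    ∀ s < i, ∀ t < i, (place A x s).1 = (place A x t).1 →
      (place A x s).2 < (place A x t).2 → x s < x t := by
  have h := hA i (fun t : Fin i => x t) (by
    intro s t hst
    exact Fin.ext (hx s s.2 t t.2 hst))
  obtain ⟨h1, h2, h3⟩ := h
  have e := inducedAssign_eq_place A x i
  refine ⟨fun t ht => ?_, fun s hs t ht hst => ?_, fun s hs t ht hst hlt => ?_⟩
  · have := h1 ⟨t, ht⟩
    rwa [e] at this
  · have := @h2 ⟨s, hs⟩ ⟨t, ht⟩ (by rw [e, e]; exact hst)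
    simpa using this
  · exact h3 ⟨s, hs⟩ ⟨t, ht⟩ (by rw [e, e]; exact hst) (by rw [e, e]; exact hlt)

theorem AdversaryInv.step {k n : ℕ} {A : List ℕ → ℕ × ℕ} (hA : IsOnlineBinSorting k A)
    {i : ℕ} (hi : i < n) {x : ℕ → ℕ} {a : ℕ} {lo hi' : ℕ → ℕ}
    (H : AdversaryInv k n A i x a lo hi') :
    ∃ y b lo₂ hi₂, AdversaryInv k n A (i + 1) y b lo₂ hi₂ := by
  obtain ⟨inj, mem, bound, outside, lo_lt_hi, width, lo_spec, hi_spec⟩ := H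
  have hw : 2 ^ (n - i) = 2 * 2 ^ (n - (i + 1)) := by
    rw [← pow_succ']; congr 1; omega
  have hpos : 0 < 2 ^ (n - (i + 1)) := by positivity
  rw [hw] at bound outside hi_spec
  generalize hwd : 2 ^ (n - (i + 1)) = w at *
  let y := Function.update x i (a + w)
  have yi : y i = a + w := by simp [y]
  have yt : ∀ t, t < i → y t = x t := fun t ht => by simp [y, ht.ne]
  have py : ∀ t, t < i → place A y t = place A x t := fun t ht =>
    place_congr A y x t fun s hs => yt s (by omega)
  have cy : ∀ j, arrayCount A y i j = arrayCount A x i j := fun j =>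
    arrayCount_congr A y x i j yt
  have lt_cases : ∀ t, t < i + 1 → t < i ∨ t = i := fun t ht => by omega
  have yinj : ∀ s < i + 1, ∀ t < i + 1, y s = y t → s = t := by
    intro s hs t ht hst
    rcases lt_cases s hs with hs | rfl <;> rcases lt_cases t ht with ht | rfl
    · rw [yt s hs, yt t ht] at hst; exact inj s hs t ht hst
    · rw [yt s hs, yi] at hst; have := outside s hs; omega
    · rw [yt t ht, yi] at hst; have := outside t ht; omega
    · rfl
  have ymem : ∀ t < i + 1, 1 ≤ y t ∧ y t < 2 ^ n := by
    intro t ht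
    rcases lt_cases t ht with ht | rfl
    · rw [yt t ht]; exact mem t ht
    · rw [yi]; omega
  obtain ⟨v1, v2, v3⟩ := hA.place_valid yinj
  obtain ⟨⟨j, s⟩, hp⟩ : ∃ p, place A y i = p := ⟨_, rfl⟩
  obtain ⟨hs1, hsk⟩ := v1 i (by omega)
  rw [hp] at hs1 hsk
  simp only at hs1 hsk
  have hlo : lo j < s := by
    rcases lo_spec j with h | ⟨t, ht, hpt, hxt⟩
    · omega
    · rw [← py t ht] at hpt
      by_contra hcon
      rcases (not_lt.1 hcon).eq_or_lt with h | h
      · have := v2 t (by omega) i (by omega) (by rw [hpt, hp, h])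
        omega
      · have := v3 i (by omega) t (by omega) (by rw [hpt, hp]) (by rw [hpt, hp]; exact h)
        rw [yi, yt t ht] at this
        omega
  have hhi : s < hi' j := by
    rcases hi_spec j with h | ⟨t, ht, hpt, hxt⟩
    · omega
    · rw [← py t ht] at hpt
      by_contra hcon
      rcases (not_lt.1 hcon).eq_or_lt with h | h
      · have := v2 t (by omega) i (by omega) (by rw [hpt, hp, h])
        omega
      · have := v3 t (by omega) i (by omega) (by rw [hpt, hp]) (by rw [hpt, hp]; exact h)
        rw [yi, yt t ht] at this
        omega
  have hcount : ∀ j', arrayCount A y (i + 1) j' =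
      arrayCount A x i j' + if j = j' then 1 else 0 := by
    intro j'
    rw [arrayCount_succ, cy, hp]
  have hwj := width j
  -- Continue in the half of the interval on the side where array `j` has the smaller gap.
  by_cases hhalf : s - lo j ≤ hi' j - s
  · refine ⟨y, a, lo, Function.update hi' j s, yinj, ymem, by omega, ?_, ?_, ?_, ?_, ?_⟩
    · intro t ht
      rw [hwd]
      rcases lt_cases t ht with ht | rfl
      · rw [yt t ht]; have := outside t ht; omega
      · rw [yi]; omega
    · intro j'
      by_cases h : j' = j
      · subst h; simpa using hlo
      · simpa [h] using lo_lt_hi j'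
    · intro j'
      rw [hcount]
      by_cases h : j' = j
      · subst h
        simp only [Function.update_self, if_true, pow_succ']
        calc (s - lo j') * (2 * 2 ^ arrayCount A x i j')
            = (2 * (s - lo j')) * 2 ^ arrayCount A x i j' := by ring
          _ ≤ (hi' j' - lo j') * 2 ^ arrayCount A x i j' :=
            Nat.mul_le_mul_right _ (by omega)
          _ ≤ k + 1 := hwj
      · simpa [h, Ne.symm h] using width j'
    · intro j'
      rcases lo_spec j' with h | ⟨t, ht, hpt, hxt⟩
      · exact Or.inl h
      · exact Or.inr ⟨t, by omega, by rw [py t ht, hpt], by rwa [yt t ht]⟩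
    · intro j'
      rw [hwd]
      by_cases h : j' = j
      · subst h
        exact Or.inr ⟨i, by omega, by simpa using hp, by omega⟩
      · rw [Function.update_of_ne h]
        rcases hi_spec j' with h | ⟨t, ht, hpt, hxt⟩
        · exact Or.inl h
        · exact Or.inr ⟨t, by omega, by rw [py t ht, hpt], by rw [yt t ht]; omega⟩
  · refine ⟨y, a + w, Function.update lo j s, hi', yinj, ymem, by omega, ?_, ?_, ?_, ?_, ?_⟩
    · intro t ht
      rw [hwd]
      rcases lt_cases t ht with ht | rfl
      · rw [yt t ht]; have := outside t ht; omega
      · rw [yi]; omega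
    · intro j'
      by_cases h : j' = j
      · subst h; simpa using hhi
      · simpa [h] using lo_lt_hi j'
    · intro j'
      rw [hcount]
      by_cases h : j' = j
      · subst h
        simp only [Function.update_self, if_true, pow_succ']
        calc (hi' j' - s) * (2 * 2 ^ arrayCount A x i j')
            = (2 * (hi' j' - s)) * 2 ^ arrayCount A x i j' := by ring
          _ ≤ (hi' j' - lo j') * 2 ^ arrayCount A x i j' :=
            Nat.mul_le_mul_right _ (by omega)
          _ ≤ k + 1 := hwj
      · simpa [h, Ne.symm h] using width j'
    · intro j'
      by_cases h : j' = j
      · subst h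
        exact Or.inr ⟨i, by omega, by simpa using hp, by omega⟩
      · rw [Function.update_of_ne h]
        rcases lo_spec j' with h | ⟨t, ht, hpt, hxt⟩
        · exact Or.inl h
        · exact Or.inr ⟨t, by omega, by rw [py t ht, hpt], by rw [yt t ht]; omega⟩
    · intro j'
      rw [hwd]
      rcases hi_spec j' with h | ⟨t, ht, hpt, hxt⟩
      · exact Or.inl h
      · exact Or.inr ⟨t, by omega, by rw [py t ht, hpt], by rw [yt t ht]; omega⟩

/-- The adversary's sequence: no array receives more than `log₂ (k + 1)` of its `n` numbers. -/
theorem exists_hard_sequence (k n : ℕ) (A : List ℕ → ℕ × ℕ) (hA : IsOnlineBinSorting k A) :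
    ∃ σ : Fin n → ℕ, Function.Injective σ ∧ (∀ i, 1 ≤ σ i ∧ σ i ≤ 2 ^ n - 1) ∧
      n ≤ Nat.log 2 (k + 1) * arraysUsed (inducedAssign A σ) := by
  have key : ∀ i ≤ n, ∃ x a lo hi, AdversaryInv k n A i x a lo hi := by
    intro i
    induction i with
    | zero => exact fun _ => ⟨_, _, _, _, AdversaryInv.start k n A⟩
    | succ i ih =>
      intro h
      obtain ⟨x, a, lo, hi, H⟩ := ih (by omega)
      exact H.step hA (by omega)
  obtain ⟨x, a, lo, hi, H⟩ := key n le_rfl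
  refine ⟨fun t => x t, fun s t hst => Fin.ext (H.inj s s.2 t t.2 hst), fun t => ?_, ?_⟩
  · have := H.mem t t.2
    dsimp only
    omega
  · have hcount : ∀ j, arrayCount A x n j ≤ Nat.log 2 (k + 1) := by
      intro j
      apply Nat.le_log_of_pow_le (by norm_num)
      have h1 := H.lo_lt_hi j
      exact (Nat.le_mul_of_pos_left _ (by omega)).trans (H.width j)
    have := Finset.card_le_mul_card_image (s := (Finset.univ : Finset (Fin n)))
      (f := fun i => (inducedAssign A (fun t : Fin n => x t) i).1) (Nat.log 2 (k + 1)) (by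
        intro j _
        refine le_trans ?_ (hcount j)
        unfold arrayCount
        refine Finset.card_le_card_of_injOn (fun t : Fin n => (t : ℕ)) ?_
          (fun s _ t _ h => Fin.ext h)
        intro t ht
        simpa [inducedAssign_eq_place] using ht)
    simpa [arraysUsed] using this

/-- Sorting the numbers and filling the arrays one after the other uses `⌈n / k⌉` arrays. -/
theorem exists_offline (k : ℕ) (hk : 1 ≤ k) (n : ℕ) (hn : 1 ≤ n) (σ : Fin n → ℕ)
    (hσ : Function.Injective σ) :
    ∃ f : Fin n → ℕ × ℕ, ValidAssign k σ f ∧ arraysUsed f ≤ (n + k - 1) / k := by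
  let r : Fin n → ℕ := fun i => (Finset.univ.filter fun j => σ j < σ i).card
  have hmono : ∀ i j, σ i < σ j → r i < r j := by
    intro i j hij
    apply Finset.card_lt_card
    rw [Finset.ssubset_iff_of_subset]
    · exact ⟨i, by simpa using hij, by simp⟩
    · intro t ht
      simp only [Finset.mem_filter, Finset.mem_univ, true_and] at ht ⊢
      omega
  have hrn : ∀ i, r i < n := by
    intro i
    have : r i < (Finset.univ : Finset (Fin n)).card := by
      apply Finset.card_lt_card
      rw [Finset.ssubset_iff_of_subset (Finset.subset_univ _)]
      exact ⟨i, by simp, by simp⟩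
    simpa using this
  have hlt : ∀ i j, r i < r j → σ i < σ j := by
    intro i j hij
    by_contra h
    rcases (not_lt.1 h).eq_or_lt with h | h
    · have := hσ h; subst this; omega
    · have := hmono _ _ h; omega
  refine ⟨fun i => (r i / k, r i % k + 1), ⟨fun i => ?_, fun i j hij => ?_, fun i j h1 h2 => ?_⟩, ?_⟩
  · have := Nat.mod_lt (r i) hk
    dsimp only
    omega
  · simp only [Prod.mk.injEq, Nat.add_right_cancel_iff] at hij
    have hr : r i = r j := by rw [← Nat.div_add_mod (r i) k, hij.1, hij.2, Nat.div_add_mod]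
    apply hσ
    rcases lt_trichotomy (σ i) (σ j) with h | h | h
    · have := hmono _ _ h; omega
    · exact h
    · have := hmono _ _ h; omega
  · apply hlt
    dsimp only at h1 h2
    rw [← Nat.div_add_mod (r i) k, ← Nat.div_add_mod (r j) k, h1]
    omega
  · have hsub : (Finset.univ.image fun i : Fin n => r i / k) ⊆
        Finset.range ((n + k - 1) / k) := by
      intro t ht
      obtain ⟨i, _, rfl⟩ := Finset.mem_image.1 ht
      have h1 := hrn i
      rw [Finset.mem_range, Nat.lt_iff_add_one_le, ← Nat.add_div_right _ hk]
      exact Nat.div_le_div_right (by omega)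
    simpa [arraysUsed] using Finset.card_le_card hsub

/-- every deterministic online algorithm for BinSorting[k] can be forced, by a
sequence of `n` distinct numbers from `{1,…,2^n − 1}`, to use at least
`⌈n / ⌊log₂(k+1)⌋⌉` arrays, while any `n` distinct numbers can be offline-assigned to
`⌈n/k⌉` arrays; in particular, for `k = n` the algorithm uses at least `n / ⌊log₂(n+1)⌋`
arrays on a sequence whose offline optimum is one array. -/
theorem stmt1 (k : ℕ) (hk : 1 ≤ k) (A : List ℕ → ℕ × ℕ) (hA : IsOnlineBinSorting k A)
    (n : ℕ) (hn : 1 ≤ n) :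
    (∃ σ : Fin n → ℕ, Function.Injective σ ∧
      (∀ i, 1 ≤ σ i ∧ σ i ≤ 2 ^ n - 1) ∧
      (n + Nat.log 2 (k + 1) - 1) / Nat.log 2 (k + 1) ≤ arraysUsed (inducedAssign A σ)) ∧
    (∀ σ : Fin n → ℕ, Function.Injective σ →
      ∃ f : Fin n → ℕ × ℕ, ValidAssign k σ f ∧ arraysUsed f ≤ (n + k - 1) / k) ∧
    (k = n → ∃ σ : Fin n → ℕ, Function.Injective σ ∧
      (∀ i, 1 ≤ σ i ∧ σ i ≤ 2 ^ n - 1) ∧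
      (n : ℝ) / (Nat.log 2 (n + 1) : ℝ) ≤ (arraysUsed (inducedAssign A σ) : ℝ) ∧
      ∃ f : Fin n → ℕ × ℕ, ValidAssign k σ f ∧ arraysUsed f = 1) := by
  have hlog : 0 < Nat.log 2 (k + 1) := Nat.log_pos (by norm_num) (by omega)
  obtain ⟨σ, hσ, hmem, hcard⟩ := exists_hard_sequence k n A hA
  refine ⟨⟨σ, hσ, hmem, ?_⟩, exists_offline k hk n hn, ?_⟩
  · rw [← Nat.lt_add_one_iff, Nat.div_lt_iff_lt_mul hlog, add_mul, one_mul, mul_comm (arraysUsed _)]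
    omega
  · rintro rfl
    refine ⟨σ, hσ, hmem, ?_, ?_⟩
    · rw [div_le_iff₀ (by exact_mod_cast hlog), mul_comm]
      exact_mod_cast hcard
    · obtain ⟨f, hf, hle⟩ := exists_offline k hk k hn σ hσ
      refine ⟨f, hf, le_antisymm (hle.trans ?_) ?_⟩
      · rw [← Nat.lt_add_one_iff, Nat.div_lt_iff_lt_mul hk]
        omega
      · exact Finset.card_pos.2 ⟨_, Finset.mem_image_of_mem _ (Finset.mem_univ ⟨0, hn⟩)⟩
end

section
/- For every integer k ≥ 1 there exists a deterministic online algorithm for BinSorting[k] that, on every finite sequence of n distinct natural numbers, uses at most ⌈n / ⌊log₂(k+1)⌋⌉ arrays. (The offline optimum for n distinct numbers is ⌈n/k⌉ arrays, so this algorithm has absolute competitive ratio ⌈n/⌊log₂(k+1)⌋⌉ / ⌈n/k⌉ ∈ O(k/log k).) -/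
/-- The slot, among `1, …, 2 ^ h - 1`, of a number `x` that arrives after the numbers in the list
(oldest first) in an array with room for `h` numbers: binary digits `[y ≤ x]` for the
earlier numbers `y`, followed by `1` and zeros. Meaningful when the list is shorter than `h`. -/
def binSlot : ℕ → List ℕ → ℕ → ℕ
  | h, [], _ => 2 ^ (h - 1)
  | h, y :: ys, x => (if y ≤ x then 2 ^ (h - 1) else 0) + binSlot (h - 1) ys x

lemma binSlot_bounds (x : ℕ) : ∀ (p : List ℕ) (h : ℕ), p.length < h →
    1 ≤ binSlot h p x ∧ binSlot h p x < 2 ^ h := by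
  intro p
  induction p with
  | nil =>
    intro h hh
    obtain ⟨h, rfl⟩ : ∃ t, h = t + 1 := ⟨h - 1, by simp at hh; omega⟩
    have := Nat.one_le_two_pow (n := h)
    simp only [binSlot, Nat.add_sub_cancel, pow_succ]
    omega
  | cons y ys ih =>
    intro h hh
    obtain ⟨h, rfl⟩ : ∃ t, h = t + 1 := ⟨h - 1, by simp at hh; omega⟩
    have := ih h (by simpa using hh)
    simp only [binSlot, Nat.add_sub_cancel, pow_succ]
    split_ifs <;> omega

/-- If `x` is preceded by `p` in its block and `z` comes later, with `r` in between, then the slots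
of `x` and `z` are ordered like `x` and `z`. -/
lemma binSlot_compare (x z : ℕ) (r : List ℕ) : ∀ (p : List ℕ) (h : ℕ),
    p.length + 1 + r.length < h →
    (x < z → binSlot h p x < binSlot h (p ++ x :: r) z) ∧
    (z < x → binSlot h (p ++ x :: r) z < binSlot h p x) := by
  intro p
  induction p with
  | nil =>
    intro h hh
    obtain ⟨h, rfl⟩ : ∃ t, h = t + 1 := ⟨h - 1, by omega⟩
    have := binSlot_bounds z r h (by simp at hh; omega)
    simp only [binSlot, Nat.add_sub_cancel, List.nil_append]
    split_ifs <;> omega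
  | cons y ys ih =>
    intro h hh
    simp only [List.length_cons] at hh
    obtain ⟨h, rfl⟩ : ∃ t, h = t + 1 := ⟨h - 1, by omega⟩
    have h1 := ih h (by omega)
    have h2 := binSlot_bounds x ys h (by omega)
    have h3 := binSlot_bounds z (ys ++ x :: r) h (by simp; omega)
    simp only [binSlot, Nat.add_sub_cancel, List.cons_append]
    split_ifs <;> omega

/-- The online algorithm: the number at position `i` (counted from `0`) goes to array `i / m`, into
the slot computed from the earlier numbers of its block, which starts at position `m * (i / m)`. -/
def blockAlg (m : ℕ) (l : List ℕ) : ℕ × ℕ :=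
  ((l.length - 1) / m,
    binSlot m (l.dropLast.drop (m * ((l.length - 1) / m))) (l.getLastD 0))

lemma inducedAssign_blockAlg (m : ℕ) {n : ℕ} (σ : Fin n → ℕ) (i : Fin n) :
    inducedAssign (blockAlg m) σ i =
      (i.1 / m, binSlot m (((List.ofFn σ).take i.1).drop (m * (i.1 / m))) (σ i)) := by
  have h : (List.ofFn σ).take (i.1 + 1) = (List.ofFn σ).take i.1 ++ [σ i] := by
    rw [List.take_add_one]
    simp
  simp [inducedAssign, blockAlg, h]

/-- Two positions `i < j` of the same block get slots ordered like their numbers. -/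
lemma blockAlg_compare (m : ℕ) (hm : 0 < m) {n : ℕ} (σ : Fin n → ℕ) (i j : Fin n) (hij : i < j)
    (hb : i.1 / m = j.1 / m) :
    (σ i < σ j →
      (inducedAssign (blockAlg m) σ i).2 < (inducedAssign (blockAlg m) σ j).2) ∧
    (σ j < σ i →
      (inducedAssign (blockAlg m) σ j).2 < (inducedAssign (blockAlg m) σ i).2) := by
  have hij' : i.1 < j.1 := hij
  have hjn := j.2
  simp only [inducedAssign_blockAlg, ← hb]
  have hbi : m * (i.1 / m) ≤ i.1 := Nat.mul_div_le _ _
  have hjb : j.1 < m * (i.1 / m) + m := by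
    rw [hb]; exact Nat.lt_mul_div_succ _ hm
  have key : (List.ofFn σ).take j.1 = (List.ofFn σ).take i.1 ++
      σ i :: ((List.ofFn σ).drop (i.1 + 1)).take (j.1 - i.1 - 1) := by
    obtain ⟨d, hd⟩ : ∃ d, j.1 = i.1 + (d + 1) := ⟨j.1 - i.1 - 1, by omega⟩
    rw [hd, List.take_add, List.drop_eq_getElem_cons (by simp), List.take_succ_cons]
    simp
  rw [key, List.drop_append_of_le_length (by simp; omega)]
  apply binSlot_compare
  simp
  omega

/-- there is a deterministic online algorithm for BinSorting[k] that on every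
sequence of `n` distinct natural numbers uses at most `⌈n / ⌊log₂(k+1)⌋⌉` arrays. -/
theorem stmt2 (k : ℕ) (hk : 1 ≤ k) :
    ∃ A : List ℕ → ℕ × ℕ, IsOnlineBinSorting k A ∧
      ∀ (n : ℕ) (σ : Fin n → ℕ), Function.Injective σ →
        arraysUsed (inducedAssign A σ) ≤
          (n + Nat.log 2 (k + 1) - 1) / Nat.log 2 (k + 1) := by
  set m := Nat.log 2 (k + 1) with hmdef
  have hm : 0 < m := Nat.log_pos (by norm_num) (by omega)
  have hpow : 2 ^ m ≤ k + 1 := Nat.pow_log_le_self 2 (by omega)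
  refine ⟨blockAlg m, ?_, ?_⟩
  · intro n σ hσ
    have hfst : ∀ i, (inducedAssign (blockAlg m) σ i).1 = i.1 / m := fun i => by
      rw [inducedAssign_blockAlg]
    refine ⟨?_, ?_, ?_⟩
    · intro i
      rw [inducedAssign_blockAlg]
      have := binSlot_bounds (σ i) (((List.ofFn σ).take i.1).drop (m * (i.1 / m))) m (by
        have := Nat.lt_mul_div_succ i.1 hm
        simp
        rw [mul_add] at this
        omega)
      dsimp only
      omega
    · intro i j hij
      by_contra hne
      have hb : i.1 / m = j.1 / m := by rw [← hfst, ← hfst, hij]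
      have h2 := congrArg Prod.snd hij
      have hs : σ i ≠ σ j := fun h => hne (hσ h)
      rcases lt_or_gt_of_ne hne with h | h
      · have := blockAlg_compare m hm σ i j h hb
        omega
      · have := blockAlg_compare m hm σ j i h hb.symm
        omega
    · intro i j hb hlt
      rw [hfst, hfst] at hb
      have hne : i ≠ j := by rintro rfl; omega
      have hs : σ i ≠ σ j := fun h => hne (hσ h)
      rcases lt_or_gt_of_ne hne with h | h
      · have := blockAlg_compare m hm σ i j h hb
        omega
      · have := blockAlg_compare m hm σ j i h hb.symm
        omega
  · intro n σ _
    have hsub : (Finset.univ.image fun i => (inducedAssign (blockAlg m) σ i).1) ⊆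
        Finset.range ((n + m - 1) / m) := by
      intro a ha
      simp only [Finset.mem_image, Finset.mem_univ, true_and] at ha
      obtain ⟨i, rfl⟩ := ha
      rw [inducedAssign_blockAlg, Finset.mem_range]
      have h1 : (i.1 + m) / m = i.1 / m + 1 := Nat.add_div_right _ hm
      have h2 : (i.1 + m) / m ≤ (n + m - 1) / m := Nat.div_le_div_right (by omega)
      dsimp only
      omega
    simpa [arraysUsed] using Finset.card_le_card hsub
end

section
/- Fix an integer k ≥ 1 and a finite set I of positive integers, and consider the L-shapes {L_i : i ∈ I} from the family 𝓛^k. (a) If |I| ≤ k, then {L_i : i ∈ I} admits a valid packing into one unit bin. (b) Conversely, in every valid packing of {L_i : i ∈ I} into one unit bin one has |I| ≤ k, and for all i < j in I the x-coordinates of the translated reference points satisfy x_i ≥ x_j + 1/(2k); that is, the shapes appear from left to right in strictly descending order of their indices, with horizontal separation at least 1/(2k). -/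
/-!
Write `w = 1/(2k)` and `h_i = 2^(-i-1) ≤ 1/4`, so `h_j ≤ h_i / 2` for `i < j`.

Containment in the bin forces `0 ≤ x_i ≤ 1/2 - w` and `0 ≤ y_i ≤ h_i`. Hence every vertical arm
crosses the line `y = 1/2`, and disjointness gives `|x_i - x_j| ≥ w`. If `i < j` and `L_j` lay to
the right of `L_i`, then the vertical arm of `L_j` would stand above the horizontal arm of `L_i`
(which is longer than `1/2`), so `y_j ≥ y_i + h_i ≥ h_i > h_j`, which is impossible
(`packing_sep`). The points `x_i ∈ [0, (k-1) w]` being `w`-separated, `i ↦ ⌊2k x_i⌋` is an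
injection into `{0, …, k-1}`, so `|I| ≤ k`.

For existence, put `L_i` at `(r_i w, h_i)`, where `r_i` is the number of larger indices in `I`.
For `i < j`, the vertical arm of `L_j` is to the left of `L_i`, and its horizontal arm ends at
height `2 h_j ≤ h_i`, below `L_i`.
-/

/-- An L-shape, given by its four parameters: arm lengths `lx, ly` and widths `wx, wy`. -/
structure LShape where
  lx : ℝ
  wx : ℝ
  ly : ℝ
  wy : ℝ

/-- The parameter constraints of an L-shape: `0 ≤ wx ≤ lx ≤ 1` and `0 ≤ wy ≤ ly ≤ 1`. -/
def LShape.IsValid (L : LShape) : Prop :=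
  0 ≤ L.wx ∧ L.wx ≤ L.lx ∧ L.lx ≤ 1 ∧ 0 ≤ L.wy ∧ L.wy ≤ L.ly ∧ L.ly ≤ 1

/-- The point set `([0,lx]×[0,wy]) ∪ ([0,wx]×[0,ly])` of an L-shape (reference point at the
origin). -/
def LShape.toSet (L : LShape) : Set (ℝ × ℝ) :=
  Set.Icc ((0, 0) : ℝ × ℝ) (L.lx, L.wy) ∪ Set.Icc ((0, 0) : ℝ × ℝ) (L.wx, L.ly)

/-- The family `𝓛^k`: the L-shape `L_i` has `ℓx = 1/2 + 1/(2k)`, `wx = 1/(2k)`,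
`ℓy = 1 − 2^(−i−1)`, `wy = 2^(−i−1)`. -/
noncomputable def Lfam (k i : ℕ) : LShape :=
  ⟨1 / 2 + 1 / (2 * k), 1 / (2 * k), 1 - 1 / 2 ^ (i + 1), 1 / 2 ^ (i + 1)⟩

/-- A valid packing of the shapes `L i`, `i ∈ I`, translated by `v i`, into one unit bin. -/
def ValidPackingOn (I : Finset ℕ) (L : ℕ → LShape) (v : ℕ → ℝ × ℝ) : Prop :=
  (∀ i ∈ I, planeTranslate (v i) (L i).toSet ⊆ unitBin) ∧
  ∀ i ∈ I, ∀ j ∈ I, i ≠ j →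
    Disjoint (interior (planeTranslate (v i) (L i).toSet))
             (interior (planeTranslate (v j) (L j).toSet))

lemma mem_planeTranslate_toSet {L : LShape} {v p : ℝ × ℝ} :
    p ∈ planeTranslate v L.toSet ↔
      ((v.1 ≤ p.1 ∧ p.1 ≤ v.1 + L.lx) ∧ (v.2 ≤ p.2 ∧ p.2 ≤ v.2 + L.wy)) ∨
      ((v.1 ≤ p.1 ∧ p.1 ≤ v.1 + L.wx) ∧ (v.2 ≤ p.2 ∧ p.2 ≤ v.2 + L.ly)) := by
  have h : p ∈ planeTranslate v L.toSet ↔ p - v ∈ L.toSet := by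
    unfold planeTranslate
    constructor
    · rintro ⟨q, hq, rfl⟩
      simpa using hq
    · intro hp
      exact ⟨p - v, hp, by simp⟩
  rw [h]
  simp only [LShape.toSet, Set.mem_union, Set.mem_Icc, Prod.le_def, Prod.fst_sub, Prod.snd_sub,
    sub_nonneg, sub_le_iff_le_add']
  tauto

lemma mem_interior_of_horizontal {L : LShape} {v : ℝ × ℝ} {x y : ℝ}
    (hx : v.1 < x) (hx' : x < v.1 + L.lx) (hy : v.2 < y) (hy' : y < v.2 + L.wy) :
    (x, y) ∈ interior (planeTranslate v L.toSet) := by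
  refine mem_interior.2 ⟨Set.Ioo v.1 (v.1 + L.lx) ×ˢ Set.Ioo v.2 (v.2 + L.wy), ?_,
    isOpen_Ioo.prod isOpen_Ioo, ⟨⟨hx, hx'⟩, ⟨hy, hy'⟩⟩⟩
  rintro p ⟨⟨h1, h2⟩, ⟨h3, h4⟩⟩
  exact mem_planeTranslate_toSet.2 (Or.inl ⟨⟨h1.le, h2.le⟩, ⟨h3.le, h4.le⟩⟩)

lemma mem_interior_of_vertical {L : LShape} {v : ℝ × ℝ} {x y : ℝ}
    (hx : v.1 < x) (hx' : x < v.1 + L.wx) (hy : v.2 < y) (hy' : y < v.2 + L.ly) :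
    (x, y) ∈ interior (planeTranslate v L.toSet) := by
  refine mem_interior.2 ⟨Set.Ioo v.1 (v.1 + L.wx) ×ˢ Set.Ioo v.2 (v.2 + L.ly), ?_,
    isOpen_Ioo.prod isOpen_Ioo, ⟨⟨hx, hx'⟩, ⟨hy, hy'⟩⟩⟩
  rintro p ⟨⟨h1, h2⟩, ⟨h3, h4⟩⟩
  exact mem_planeTranslate_toSet.2 (Or.inr ⟨⟨h1.le, h2.le⟩, ⟨h3.le, h4.le⟩⟩)

/-- Interior points of a translated L-shape lie strictly above and to the right of its reference
point. -/
lemma lt_of_mem_interior {L : LShape} {v p : ℝ × ℝ}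
    (hp : p ∈ interior (planeTranslate v L.toSet)) : v.1 < p.1 ∧ v.2 < p.2 := by
  have hsub : planeTranslate v L.toSet ⊆ Set.Ici v.1 ×ˢ Set.Ici v.2 := by
    intro q hq
    rcases mem_planeTranslate_toSet.1 hq with ⟨⟨h1, _⟩, ⟨h2, _⟩⟩ | ⟨⟨h1, _⟩, ⟨h2, _⟩⟩ <;>
      exact ⟨h1, h2⟩
  have := interior_mono hsub hp
  rw [interior_prod_eq, interior_Ici, interior_Ici] at this
  exact this

lemma height_le_quarter {i : ℕ} (hi : 1 ≤ i) : (1 : ℝ) / 2 ^ (i + 1) ≤ 1 / 4 := by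
  have h : (2 : ℝ) ^ 2 ≤ 2 ^ (i + 1) := pow_le_pow_right₀ (by norm_num) (by omega)
  exact one_div_le_one_div_of_le (by norm_num) (by linarith)

lemma two_mul_height_le {i j : ℕ} (hij : i < j) :
    2 * ((1 : ℝ) / 2 ^ (j + 1)) ≤ 1 / 2 ^ (i + 1) := by
  have h : (2 : ℝ) ^ (i + 1) ≤ 2 ^ j := pow_le_pow_right₀ (by norm_num) hij
  calc 2 * ((1 : ℝ) / 2 ^ (j + 1)) = 1 / 2 ^ j := by rw [pow_succ]; field_simp
    _ ≤ 1 / 2 ^ (i + 1) := one_div_le_one_div_of_le (by positivity) h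

lemma bounds_of_subset {k i : ℕ} (hi : 1 ≤ i) {v : ℝ × ℝ}
    (h : planeTranslate v (Lfam k i).toSet ⊆ unitBin) :
    0 ≤ v.1 ∧ v.1 + (1 / 2 + 1 / (2 * (k : ℝ))) ≤ 1 ∧ 0 ≤ v.2 ∧ v.2 ≤ 1 / 2 ^ (i + 1) := by
  have hh := height_le_quarter hi
  have hpos : (0 : ℝ) < 1 / 2 ^ (i + 1) := by positivity
  have hw : (0 : ℝ) ≤ 1 / (2 * (k : ℝ)) := by positivity
  have h1 : (v.1 + (1 / 2 + 1 / (2 * (k : ℝ))), v.2) ∈ unitBin := by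
    apply h
    rw [mem_planeTranslate_toSet]
    left
    simp only [Lfam]
    refine ⟨⟨?_, ?_⟩, ?_, ?_⟩ <;> linarith
  have h2 : (v.1, v.2 + (1 - 1 / 2 ^ (i + 1))) ∈ unitBin := by
    apply h
    rw [mem_planeTranslate_toSet]
    right
    simp only [Lfam]
    refine ⟨⟨?_, ?_⟩, ?_, ?_⟩ <;> linarith
  simp only [unitBin, Set.mem_Icc, Prod.le_def] at h1 h2
  obtain ⟨⟨_, a2⟩, a3, _⟩ := h1
  obtain ⟨⟨b1, _⟩, _, b4⟩ := h2
  exact ⟨b1, a3, a2, by linarith⟩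

/-- In a packing, the shape of smaller index lies at least `1/(2k)` further to the right. -/
lemma packing_sep {k : ℕ} (hk : 1 ≤ k) {I : Finset ℕ} (hI : ∀ i ∈ I, 1 ≤ i) {v : ℕ → ℝ × ℝ}
    (hv : ValidPackingOn I (Lfam k) v) {i j : ℕ} (hi : i ∈ I) (hj : j ∈ I) (hij : i < j) :
    (v j).1 + 1 / (2 * (k : ℝ)) ≤ (v i).1 := by
  obtain ⟨xi0, xi1, yi0, yi1⟩ := bounds_of_subset (hI i hi) (hv.1 i hi)
  obtain ⟨xj0, xj1, yj0, yj1⟩ := bounds_of_subset (hI j hj) (hv.1 j hj)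
  have hdis := Set.disjoint_left.1 (hv.2 i hi j hj hij.ne)
  have hhi := height_le_quarter (hI i hi)
  have hhj := height_le_quarter (hI j hj)
  have hpi : (0 : ℝ) < 1 / 2 ^ (i + 1) := by positivity
  have hpj : (0 : ℝ) < 1 / 2 ^ (j + 1) := by positivity
  have hji := two_mul_height_le hij
  have hk0 : (0 : ℝ) < k := by exact_mod_cast hk
  have hw : (0 : ℝ) < 1 / (2 * (k : ℝ)) := by positivity
  by_contra! hlt
  rcases lt_or_ge (v j).1 ((v i).1 + 1 / (2 * (k : ℝ))) with hlt2 | hge2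
  · -- The two vertical arms overlap on the line `y = 1/2`.
    refine hdis (a := (((v i).1 + (v j).1 + 1 / (2 * (k : ℝ))) / 2, 1 / 2)) ?_ ?_ <;>
      apply mem_interior_of_vertical <;> (try simp only [Lfam]) <;> linarith
  · -- The vertical arm of `L_j` meets the horizontal arm of `L_i`.
    obtain ⟨y, hy1, hy2⟩ : ∃ y, max (v i).2 (v j).2 < y ∧
        y < min ((v i).2 + 1 / 2 ^ (i + 1)) ((v j).2 + (1 - 1 / 2 ^ (j + 1))) := by
      apply exists_between
      rw [max_lt_iff, lt_min_iff, lt_min_iff]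
      refine ⟨⟨?_, ?_⟩, ?_, ?_⟩ <;> linarith
    rw [max_lt_iff] at hy1
    rw [lt_min_iff] at hy2
    refine hdis (a := ((v j).1 + 1 / (2 * (k : ℝ)) / 2, y)) ?_ ?_
    · apply mem_interior_of_horizontal <;> (try simp only [Lfam]) <;> linarith
    · apply mem_interior_of_vertical <;> (try simp only [Lfam]) <;> linarith

lemma packing_card_le {k : ℕ} (hk : 1 ≤ k) {I : Finset ℕ} (hI : ∀ i ∈ I, 1 ≤ i) {v : ℕ → ℝ × ℝ}
    (hv : ValidPackingOn I (Lfam k) v) : I.card ≤ k := by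
  have hk0 : (0 : ℝ) < k := by exact_mod_cast hk
  have hkw : 2 * (k : ℝ) * (1 / (2 * (k : ℝ))) = 1 := by field_simp
  have hfloor : ∀ i ∈ I, ∀ j ∈ I, i < j →
      ⌊2 * (k : ℝ) * (v j).1⌋₊ < ⌊2 * (k : ℝ) * (v i).1⌋₊ := by
    intro i hi j hj hij
    have hs := packing_sep hk hI hv hi hj hij
    have hj0 := (bounds_of_subset (hI j hj) (hv.1 j hj)).1
    have h1 : 2 * (k : ℝ) * (v j).1 + 1 ≤ 2 * (k : ℝ) * (v i).1 := by
      have := mul_le_mul_of_nonneg_left hs (by positivity : (0 : ℝ) ≤ 2 * k)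
      rw [mul_add, hkw] at this
      exact this
    rw [← Nat.succ_le_iff, Nat.succ_eq_add_one, ← Nat.floor_add_one (by positivity)]
    exact Nat.floor_le_floor h1
  have hmaps : Set.MapsTo (fun i => ⌊2 * (k : ℝ) * (v i).1⌋₊) (I : Set ℕ)
      (Finset.range k : Finset ℕ) := by
    intro i hi
    have hi' : i ∈ I := hi
    obtain ⟨h0, h1, _⟩ := bounds_of_subset (hI i hi') (hv.1 i hi')
    simp only [Finset.coe_range, Set.mem_Iio]
    rw [Nat.floor_lt (by positivity)]
    have := mul_le_mul_of_nonneg_left h1 (by positivity : (0 : ℝ) ≤ 2 * k)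
    rw [mul_add, mul_add, hkw] at this
    linarith
  have hinj : Set.InjOn (fun i => ⌊2 * (k : ℝ) * (v i).1⌋₊) (I : Set ℕ) := by
    intro i hi j hj hij
    by_contra hne
    rcases lt_or_gt_of_ne hne with h | h
    · exact (hfloor i hi j hj h).ne' hij
    · exact (hfloor j hj i hi h).ne hij
  simpa using Finset.card_le_card_of_injOn _ hmaps hinj

lemma exists_packing {k : ℕ} (hk : 1 ≤ k) {I : Finset ℕ} (hI : ∀ i ∈ I, 1 ≤ i)
    (hcard : I.card ≤ k) : ∃ v : ℕ → ℝ × ℝ, ValidPackingOn I (Lfam k) v := by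
  have hk0 : (0 : ℝ) < k := by exact_mod_cast hk
  have hw : (0 : ℝ) < 1 / (2 * (k : ℝ)) := by positivity
  have hkw : (k : ℝ) * (1 / (2 * (k : ℝ))) = 1 / 2 := by field_simp
  set w : ℝ := 1 / (2 * (k : ℝ)) with hwdef
  let r : ℕ → ℕ := fun i => (I.filter (i < ·)).card
  have hr : ∀ i ∈ I, r i + 1 ≤ k := by
    intro i hi
    refine le_trans (Finset.card_lt_card ?_) hcard
    exact Finset.filter_ssubset.2 ⟨i, hi, lt_irrefl i⟩
  have hrlt : ∀ i j, j ∈ I → i < j → r j + 1 ≤ r i := by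
    intro i j hj hij
    refine Finset.card_lt_card (Finset.ssubset_iff_of_subset ?_ |>.2
      ⟨j, Finset.mem_filter.2 ⟨hj, hij⟩, by simp⟩)
    intro m hm
    rw [Finset.mem_filter] at hm ⊢
    exact ⟨hm.1, hij.trans hm.2⟩
  have hdis : ∀ i j, j ∈ I → i < j →
      Disjoint
        (interior (planeTranslate ((r i : ℝ) * w, (1 : ℝ) / 2 ^ (i + 1)) (Lfam k i).toSet))
        (interior (planeTranslate ((r j : ℝ) * w, (1 : ℝ) / 2 ^ (j + 1)) (Lfam k j).toSet)) := by
    intro i j hj hij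
    rw [Set.disjoint_left]
    intro p hpi hpj
    obtain ⟨hx, hy⟩ := lt_of_mem_interior hpi
    have hh := two_mul_height_le hij
    have hrr : ((r j : ℝ) + 1) * w ≤ (r i : ℝ) * w :=
      mul_le_mul_of_nonneg_right (by exact_mod_cast hrlt i j hj hij) hw.le
    rcases mem_planeTranslate_toSet.1 (interior_subset hpj) with h | h
    · have := h.2.2
      simp only [Lfam] at this hy
      linarith
    · have := h.1.2
      simp only [Lfam, ← hwdef] at this hx
      linarith
  refine ⟨fun i => ((r i : ℝ) * w, 1 / 2 ^ (i + 1)), ?_, ?_⟩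
  · intro i hi p hp
    have hh := height_le_quarter (hI i hi)
    have hpos : (0 : ℝ) < 1 / 2 ^ (i + 1) := by positivity
    have hr0 : 0 ≤ (r i : ℝ) * w := by positivity
    have hr1 : ((r i : ℝ) + 1) * w ≤ (k : ℝ) * w :=
      mul_le_mul_of_nonneg_right (by exact_mod_cast hr i hi) hw.le
    rw [mem_planeTranslate_toSet] at hp
    simp only [Lfam, ← hwdef] at hp
    simp only [unitBin, Set.mem_Icc, Prod.le_def]
    rcases hp with ⟨⟨h1, h2⟩, h3, h4⟩ | ⟨⟨h1, h2⟩, h3, h4⟩ <;>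
      refine ⟨⟨?_, ?_⟩, ?_, ?_⟩ <;> linarith
  · intro i hi j hj hne
    rcases lt_or_gt_of_ne hne with h | h
    · exact hdis i j hj h
    · exact (hdis j i hi h).symm

/-- for `k ≥ 1` and a finite set `I` of positive indices, (a) if `|I| ≤ k` the
shapes `{L_i : i ∈ I} ⊆ 𝓛^k` pack into one unit bin, and (b) in every valid one-bin packing
one has `|I| ≤ k` and for `i < j` the reference points satisfy `x_i ≥ x_j + 1/(2k)`. -/
theorem stmt3 (k : ℕ) (hk : 1 ≤ k) (I : Finset ℕ) (hI : ∀ i ∈ I, 1 ≤ i) :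
    (I.card ≤ k → ∃ v : ℕ → ℝ × ℝ, ValidPackingOn I (Lfam k) v) ∧
    (∀ v : ℕ → ℝ × ℝ, ValidPackingOn I (Lfam k) v →
      I.card ≤ k ∧ ∀ i ∈ I, ∀ j ∈ I, i < j →
        (v j).1 + 1 / (2 * k) ≤ (v i).1) := by
  exact ⟨exists_packing hk hI, fun v hv =>
    ⟨packing_card_le hk hI hv, fun i hi j hj hij => packing_sep hk hI hv hi hj hij⟩⟩
end

section
/- For every deterministic online bin-packing algorithm for L-shapes and every integer n ≥ 2, there exists a sequence of n pairwise distinct L-shapes from the family 𝓛^n that admits a valid packing into a single unit bin, yet the algorithm assigns these n L-shapes to at least n/log₂(n+1) pairwise distinct bins. In particular, the asymptotic competitive ratio of every online algorithm for translational bin packing of L-shapes is Ω(n/log n). -/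
/-- The online decision (bin index, translation vector) made by algorithm `A` for the `i`-th
item of the list `l`: it depends only on the first `i+1` items. -/
def placeOf (A : List LShape → ℕ × ℝ × ℝ) (l : List LShape) (i : Fin l.length) : ℕ × ℝ × ℝ :=
  A (l.take (i.1 + 1))

/-- The placements produced by `A` on input `l` form valid bin packings: each translate lies
in the unit bin, and items in the same bin have pairwise disjoint interiors. -/
def OnlinePacks (A : List LShape → ℕ × ℝ × ℝ) (l : List LShape) : Prop :=
  (∀ i : Fin l.length, planeTranslate (placeOf A l i).2 (l.get i).toSet ⊆ unitBin) ∧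
  ∀ i j : Fin l.length, i ≠ j → (placeOf A l i).1 = (placeOf A l j).1 →
    Disjoint (interior (planeTranslate (placeOf A l i).2 (l.get i).toSet))
             (interior (planeTranslate (placeOf A l j).2 (l.get j).toSet))

/-- The number of distinct bins used by `A` on input `l`. -/
def binsUsed (A : List LShape → ℕ × ℝ × ℝ) (l : List LShape) : ℕ :=
  ((Finset.univ : Finset (Fin l.length)).image fun i => (placeOf A l i).1).card

/-! ### Geometry of the family -/

lemma Lfam_isValid (n i : ℕ) (hn : 2 ≤ n) : (Lfam n i).IsValid := by
  have hn' : (2 : ℝ) ≤ n := by exact_mod_cast hn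
  have h1 : 1 / (2 * (n : ℝ)) ≤ 1 / 4 := by
    apply one_div_le_one_div_of_le <;> linarith
  have h0 : 0 ≤ 1 / (2 * (n : ℝ)) := by positivity
  have h2 : 1 / (2 : ℝ) ^ (i + 1) ≤ 1 / 2 := by
    apply one_div_le_one_div_of_le (by norm_num)
    exact le_self_pow₀ (by norm_num) (by omega)
  have h3 : 0 ≤ 1 / (2 : ℝ) ^ (i + 1) := by positivity
  refine ⟨?_, ?_, ?_, ?_, ?_, ?_⟩ <;> simp only [Lfam] <;> linarith

lemma mem_planeTranslate (v z : ℝ × ℝ) (L : LShape) :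
    z ∈ planeTranslate v L.toSet ↔
      (v.1 ≤ z.1 ∧ v.2 ≤ z.2) ∧
        ((z.1 ≤ v.1 + L.lx ∧ z.2 ≤ v.2 + L.wy) ∨ (z.1 ≤ v.1 + L.wx ∧ z.2 ≤ v.2 + L.ly)) := by
  constructor
  · rintro ⟨y, hy, rfl⟩
    rcases hy with ⟨⟨h1, h2⟩, h3, h4⟩ | ⟨⟨h1, h2⟩, h3, h4⟩ <;> simp only at h1 h2 h3 h4
    · exact ⟨⟨by simp [h1], by simp [h2]⟩,
        .inl ⟨by simp only [Prod.fst_add]; linarith, by simp only [Prod.snd_add]; linarith⟩⟩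
    · exact ⟨⟨by simp [h1], by simp [h2]⟩,
        .inr ⟨by simp only [Prod.fst_add]; linarith, by simp only [Prod.snd_add]; linarith⟩⟩
  · rintro ⟨⟨h1, h2⟩, h⟩
    refine ⟨z - v, ?_, by simp⟩
    rcases h with ⟨h3, h4⟩ | ⟨h3, h4⟩
    · exact .inl ⟨⟨by simp [h1], by simp [h2]⟩,
        by simp only [Prod.fst_sub]; linarith, by simp only [Prod.snd_sub]; linarith⟩
    · exact .inr ⟨⟨by simp [h1], by simp [h2]⟩,
        by simp only [Prod.fst_sub]; linarith, by simp only [Prod.snd_sub]; linarith⟩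

lemma mem_interior_horizontal (v : ℝ × ℝ) (L : LShape) (x y : ℝ)
    (h1 : v.1 < x) (h2 : v.2 < y) (h3 : x < v.1 + L.lx) (h4 : y < v.2 + L.wy) :
    (x, y) ∈ interior (planeTranslate v L.toSet) := by
  refine interior_maximal (s := planeTranslate v L.toSet) (fun z hz => ?_)
    ((isOpen_Ioo (a := v.1) (b := v.1 + L.lx)).prod (isOpen_Ioo (a := v.2) (b := v.2 + L.wy)))
    ⟨⟨h1, h3⟩, h2, h4⟩
  obtain ⟨⟨a, b⟩, c, d⟩ := hz
  exact (mem_planeTranslate _ _ _).2 ⟨⟨a.le, c.le⟩, .inl ⟨b.le, d.le⟩⟩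

lemma mem_interior_vertical (v : ℝ × ℝ) (L : LShape) (x y : ℝ)
    (h1 : v.1 < x) (h2 : v.2 < y) (h3 : x < v.1 + L.wx) (h4 : y < v.2 + L.ly) :
    (x, y) ∈ interior (planeTranslate v L.toSet) := by
  refine interior_maximal (s := planeTranslate v L.toSet) (fun z hz => ?_)
    ((isOpen_Ioo (a := v.1) (b := v.1 + L.wx)).prod (isOpen_Ioo (a := v.2) (b := v.2 + L.ly)))
    ⟨⟨h1, h3⟩, h2, h4⟩
  obtain ⟨⟨a, b⟩, c, d⟩ := hz
  exact (mem_planeTranslate _ _ _).2 ⟨⟨a.le, c.le⟩, .inr ⟨b.le, d.le⟩⟩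

lemma subset_unitBin_iff (v : ℝ × ℝ) (L : LShape) (hL : L.IsValid) :
    planeTranslate v L.toSet ⊆ unitBin ↔
      0 ≤ v.1 ∧ 0 ≤ v.2 ∧ v.1 + L.lx ≤ 1 ∧ v.2 + L.ly ≤ 1 := by
  obtain ⟨a1, a2, a3, a4, a5, a6⟩ := hL
  constructor
  · intro h
    have m1 := h ((mem_planeTranslate v (v.1 + L.lx, v.2) L).2
      ⟨⟨by simp only; linarith, le_rfl⟩, .inl ⟨le_rfl, by simp only; linarith⟩⟩)
    have m2 := h ((mem_planeTranslate v (v.1, v.2 + L.ly) L).2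
      ⟨⟨le_rfl, by simp only; linarith⟩, .inr ⟨by simp only; linarith, le_rfl⟩⟩)
    obtain ⟨⟨_, b1⟩, b2, _⟩ := m1
    obtain ⟨⟨c1, _⟩, _, c2⟩ := m2
    exact ⟨c1, b1, b2, c2⟩
  · rintro ⟨h1, h2, h3, h4⟩ z hz
    obtain ⟨⟨c1, c2⟩, ⟨c3, c4⟩ | ⟨c3, c4⟩⟩ := (mem_planeTranslate _ _ _).1 hz <;>
      exact ⟨⟨by simp only; linarith, by simp only; linarith⟩,
        by simp only; linarith, by simp only; linarith⟩

lemma one_div_two_pow_le {i j : ℕ} (h : i ≤ j) : 1 / (2 : ℝ) ^ j ≤ 1 / 2 ^ i :=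
  one_div_le_one_div_of_le (by positivity) (pow_le_pow_right₀ (by norm_num) h)

/-- In a common bin, the shape of larger index lies to the left, by at least the width of a
vertical arm. -/
lemma geom_order (n i j : ℕ) (hn : 2 ≤ n) (hj : 1 ≤ j) (hij : j < i) (u v : ℝ × ℝ)
    (hu : planeTranslate u (Lfam n i).toSet ⊆ unitBin)
    (hv : planeTranslate v (Lfam n j).toSet ⊆ unitBin)
    (hd : Disjoint (interior (planeTranslate u (Lfam n i).toSet))
      (interior (planeTranslate v (Lfam n j).toSet))) :
    u.1 + 1 / (2 * n) ≤ v.1 := by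
  obtain ⟨u1, u2, u3, u4⟩ := (subset_unitBin_iff _ _ (Lfam_isValid n i hn)).1 hu
  obtain ⟨v1, v2, v3, v4⟩ := (subset_unitBin_iff _ _ (Lfam_isValid n j hn)).1 hv
  simp only [Lfam] at u3 u4 v3 v4
  have hw : 0 < 1 / (2 * (n : ℝ)) := by positivity
  have hi4 : 1 / (2 : ℝ) ^ (i + 1) ≤ 1 / 2 ^ 2 := one_div_two_pow_le (by omega)
  have hj4 : 1 / (2 : ℝ) ^ (j + 1) ≤ 1 / 2 ^ 2 := one_div_two_pow_le (by omega)
  have hij' : 1 / (2 : ℝ) ^ (i + 1) < 1 / 2 ^ (j + 1) :=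
    one_div_lt_one_div_of_lt (by positivity) (pow_lt_pow_right₀ (by norm_num) (by omega))
  have hj0 : 0 < 1 / (2 : ℝ) ^ (j + 1) := by positivity
  norm_num only at hi4 hj4
  by_contra! hlt
  rcases le_or_gt u.1 v.1 with h | h
  · -- The vertical arms overlap at height `1/2`.
    obtain ⟨x, hx1, hx2⟩ := exists_between hlt
    rw [Set.disjoint_left] at hd
    refine hd (a := (x, 1 / 2))
      (mem_interior_vertical _ _ _ _ ?_ ?_ ?_ ?_) (mem_interior_vertical _ _ _ _ ?_ ?_ ?_ ?_) <;>
      (try simp only [Lfam]) <;> linarith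
  · -- The horizontal arm of `L_j` meets the vertical arm of `L_i`.
    obtain ⟨x, hx1, hx2⟩ := exists_between (lt_add_of_pos_right u.1 hw)
    obtain ⟨y, hy1, hy2⟩ := exists_between (a₁ := max u.2 v.2)
      (a₂ := min (v.2 + 1 / (2 : ℝ) ^ (j + 1)) (u.2 + (1 - 1 / (2 : ℝ) ^ (i + 1))))
      (by apply max_lt <;> apply lt_min <;> linarith)
    obtain ⟨hy1, hy1'⟩ := max_lt_iff.1 hy1
    obtain ⟨hy2, hy2'⟩ := lt_min_iff.1 hy2
    rw [Set.disjoint_left] at hd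
    refine hd (a := (x, y))
      (mem_interior_vertical _ _ _ _ ?_ ?_ ?_ ?_)
      (mem_interior_horizontal _ _ _ _ ?_ ?_ ?_ ?_) <;>
      (try simp only [Lfam]) <;> linarith

/-! ### Packing into a single bin -/

/-- The shape of larger index `i`, to the left, is disjoint from that of index `j`. -/
lemma disjoint_of_order (n i j : ℕ) (hij : j < i) (x x' : ℝ) (hx : x + 1 / (2 * n) ≤ x') :
    Disjoint (interior (planeTranslate (x, 1 / 2 ^ (i + 1)) (Lfam n i).toSet))
      (interior (planeTranslate (x', 1 / 2 ^ (j + 1)) (Lfam n j).toSet)) := by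
  rw [Set.disjoint_left]
  intro z hz hz'
  have hz := (mem_planeTranslate _ _ _).1 (interior_subset hz)
  have hsub : planeTranslate (x', 1 / 2 ^ (j + 1)) (Lfam n j).toSet ⊆
      Set.Ici x' ×ˢ Set.Ici (1 / 2 ^ (j + 1)) := fun y hy =>
    ((mem_planeTranslate _ _ _).1 hy).1
  have hz' := interior_mono hsub hz'
  rw [interior_prod_eq, interior_Ici, interior_Ici] at hz'
  obtain ⟨h1, h2⟩ := hz'
  simp only [Set.mem_Ioi] at h1 h2
  simp only [Lfam] at hz
  have e : 1 / (2 : ℝ) ^ (i + 1) + 1 / 2 ^ (i + 1) = 1 / 2 ^ i := by field_simp; ring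
  have : 1 / (2 : ℝ) ^ i ≤ 1 / 2 ^ (j + 1) := one_div_two_pow_le (by omega)
  rcases hz.2 with ⟨_, h⟩ | ⟨h, _⟩ <;> linarith

lemma offline_packing (n : ℕ) (hn : 2 ≤ n) (idx : Fin n → ℕ) (hinj : Function.Injective idx) :
    ∃ v : Fin n → ℝ × ℝ,
      (∀ i, planeTranslate (v i) (Lfam n (idx i)).toSet ⊆ unitBin) ∧
      ∀ i j, i ≠ j →
        Disjoint (interior (planeTranslate (v i) (Lfam n (idx i)).toSet))
                 (interior (planeTranslate (v j) (Lfam n (idx j)).toSet)) := by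
  have hn0 : (0 : ℝ) < n := by exact_mod_cast (by omega : 0 < n)
  -- `r i` is the rank of item `i` in the order of decreasing index.
  let r : Fin n → ℕ := fun i => (Finset.univ.filter fun j => idx i < idx j).card
  have hr : ∀ i j, idx i < idx j → r j + 1 ≤ r i := by
    intro i j h
    apply Finset.card_lt_card
    refine Finset.ssubset_iff_of_subset (fun k hk => ?_) |>.2 ⟨j, by simpa using h, by simp⟩
    simp only [Finset.mem_filter, Finset.mem_univ, true_and] at hk ⊢
    omega
  have hrn : ∀ i, r i + 1 ≤ n := by
    intro i
    have : (Finset.univ.filter fun j => idx i < idx j) ⊂ Finset.univ :=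
      Finset.ssubset_iff_of_subset (Finset.subset_univ _) |>.2 ⟨i, by simp, by simp⟩
    simpa using Finset.card_lt_card this
  have hx : ∀ i j, idx i < idx j → (r j : ℝ) / (2 * n) + 1 / (2 * n) ≤ (r i : ℝ) / (2 * n) := by
    intro i j h
    rw [← add_div]
    apply div_le_div_of_nonneg_right _ (by positivity)
    exact_mod_cast hr i j h
  refine ⟨fun i => ((r i : ℝ) / (2 * n), 1 / 2 ^ (idx i + 1)), fun i => ?_, fun i j hij => ?_⟩
  · rw [subset_unitBin_iff _ _ (Lfam_isValid _ _ hn)]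
    have h1 : (r i : ℝ) / (2 * n) + 1 / (2 * n) ≤ 1 / 2 := by
      have : (r i : ℝ) + 1 ≤ n := by exact_mod_cast hrn i
      rw [← add_div, div_le_div_iff₀ (by positivity) (by norm_num)]
      linarith
    refine ⟨by positivity, by positivity, ?_, ?_⟩ <;> simp only [Lfam] <;> linarith
  · rcases lt_or_gt_of_ne (fun h => hij (hinj h)) with h | h
    · exact (disjoint_of_order n _ _ h _ _ (hx _ _ h)).symm
    · exact disjoint_of_order n _ _ h _ _ (hx _ _ h)

/-! ### The adversary -/

/-- The decision of the algorithm `A` on the `i`-th item of the sequence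
`L_{idx 0}, L_{idx 1}, …` of members of `𝓛^n`. -/
noncomputable def advPlace (A : List LShape → ℕ × ℝ × ℝ) (n : ℕ) (idx : ℕ → ℕ) (i : ℕ) :
    ℕ × ℝ × ℝ :=
  A ((List.range (i + 1)).map fun j => Lfam n (idx j))

lemma advPlace_congr (A : List LShape → ℕ × ℝ × ℝ) (n : ℕ) {idx idx' : ℕ → ℕ} {i : ℕ}
    (h : ∀ j ≤ i, idx j = idx' j) : advPlace A n idx i = advPlace A n idx' i := by
  unfold advPlace
  congr 1
  apply List.map_congr_left
  intro j hj
  rw [h j (by have := List.mem_range.1 hj; omega)]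

lemma take_map_range (f : ℕ → LShape) (m i : ℕ) (h : i < m) :
    ((List.range m).map f).take (i + 1) = (List.range (i + 1)).map f := by
  rw [← List.map_take, List.take_range, min_eq_left (by omega)]

lemma advPlace_valid (A : List LShape → ℕ × ℝ × ℝ)
    (hA : ∀ l : List LShape, (∀ L ∈ l, L.IsValid) → OnlinePacks A l)
    (n : ℕ) (hn : 2 ≤ n) (idx : ℕ → ℕ) :
    (∀ i, planeTranslate (advPlace A n idx i).2 (Lfam n (idx i)).toSet ⊆ unitBin) ∧
    ∀ i j, i ≠ j → (advPlace A n idx i).1 = (advPlace A n idx j).1 →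
      Disjoint (interior (planeTranslate (advPlace A n idx i).2 (Lfam n (idx i)).toSet))
        (interior (planeTranslate (advPlace A n idx j).2 (Lfam n (idx j)).toSet)) := by
  have key : ∀ m, OnlinePacks A ((List.range m).map fun j => Lfam n (idx j)) := by
    intro m
    apply hA
    intro L hL
    obtain ⟨j, _, rfl⟩ := List.mem_map.1 hL
    exact Lfam_isValid _ _ hn
  have hpl : ∀ (m i : ℕ) (h : i < ((List.range m).map fun j => Lfam n (idx j)).length),
      placeOf A ((List.range m).map fun j => Lfam n (idx j)) ⟨i, h⟩ = advPlace A n idx i := by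
    intro m i h
    unfold placeOf advPlace
    rw [take_map_range _ _ _ (by simpa using h)]
  constructor
  · intro i
    have := (key (i + 1)).1 ⟨i, by simp⟩
    rw [hpl] at this
    simpa using this
  · intro i j hij hb
    have := (key (max i j + 1)).2 ⟨i, by simp⟩ ⟨j, by simp⟩ (by simpa using hij)
    rw [hpl, hpl] at this
    simpa using this hb

/-- The number of the first `m` items that are put into bin `B`. -/
noncomputable def advCount (A : List LShape → ℕ × ℝ × ℝ) (n : ℕ) (idx : ℕ → ℕ) (m B : ℕ) : ℕ :=
  ((Finset.range m).filter fun i => (advPlace A n idx i).1 = B).card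

/-- The binary-search invariant for bin `B` after `m` items, when all later indices lie strictly
between `a` and `b`: the vertical arms of later items in `B` are confined to `[p, q]`, each end
of which is an end of the range `[0, 1/2]` or is enforced by an item already in `B`, and the
length of `[p, q]` has been halved often enough. -/
def AdvSlot (A : List LShape → ℕ × ℝ × ℝ) (n : ℕ) (idx : ℕ → ℕ) (m a b B : ℕ) : Prop :=
  ∃ p q : ℝ, p ≤ q ∧
    (q = 1 / 2 ∨ ∃ i < m, (advPlace A n idx i).1 = B ∧ idx i ≤ a ∧
      (advPlace A n idx i).2.1 = q) ∧
    (p = 0 ∨ ∃ i < m, (advPlace A n idx i).1 = B ∧ b ≤ idx i ∧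
      (advPlace A n idx i).2.1 + 1 / (2 * n) = p) ∧
    2 ^ advCount A n idx m B * (2 * n * (q - p) + 1) ≤ (n : ℝ) + 1

/-- The state of the game after `m` items: `(a, b)` is the interval of indices still in play,
large enough for `n - m` further bisections. -/
structure AdvInv (A : List LShape → ℕ × ℝ × ℝ) (n : ℕ) (idx : ℕ → ℕ) (m a b : ℕ) : Prop where
  room : a + 2 ^ (n - m) ≤ b
  pos : ∀ i < m, 1 ≤ idx i
  out : ∀ i < m, idx i ≤ a ∨ b ≤ idx i
  inj : ∀ i < m, ∀ j < m, idx i = idx j → i = j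
  slot : ∀ B, AdvSlot A n idx m a b B

lemma adv_step (A : List LShape → ℕ × ℝ × ℝ)
    (hA : ∀ l : List LShape, (∀ L ∈ l, L.IsValid) → OnlinePacks A l)
    (n : ℕ) (hn : 2 ≤ n) (idx : ℕ → ℕ) (m a b : ℕ) (hm : m < n) (h : AdvInv A n idx m a b) :
    ∃ idx' a' b', AdvInv A n idx' (m + 1) a' b' := by
  have hn0 : (0 : ℝ) < n := by exact_mod_cast (by omega : 0 < n)
  obtain ⟨c, hc⟩ : ∃ c, c = a + 2 ^ (n - (m + 1)) := ⟨_, rfl⟩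
  have hpow : 2 ^ (n - m) = 2 * 2 ^ (n - (m + 1)) := by
    rw [← pow_succ']; congr 1; omega
  have hpos : 0 < 2 ^ (n - (m + 1)) := by positivity
  have hroom := h.room
  have hac : a < c := by omega
  have hcb : c < b := by omega
  obtain ⟨idx', hidx'⟩ : ∃ idx', idx' = Function.update idx m c := ⟨_, rfl⟩
  have hold : ∀ i < m, idx' i = idx i := by
    intro i hi; rw [hidx', Function.update_of_ne (by omega)]
  have hnew : idx' m = c := by rw [hidx', Function.update_self]
  have hplace : ∀ i < m, advPlace A n idx' i = advPlace A n idx i := fun i hi =>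
    advPlace_congr A n fun j hj => hold j (by omega)
  have hpos' : ∀ i < m + 1, 1 ≤ idx' i := by
    intro i hi
    rcases Nat.lt_succ_iff_lt_or_eq.1 hi with hi | rfl
    · rw [hold i hi]; exact h.pos i hi
    · omega
  have hinj' : ∀ i < m + 1, ∀ j < m + 1, idx' i = idx' j → i = j := by
    intro i hi j hj hij
    rcases Nat.lt_succ_iff_lt_or_eq.1 hi with hi | hi <;>
      rcases Nat.lt_succ_iff_lt_or_eq.1 hj with hj | hj
    · rw [hold i hi, hold j hj] at hij; exact h.inj i hi j hj hij
    · subst hj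
      rw [hold i hi, hnew] at hij
      rcases h.out i hi with h' | h' <;> omega
    · subst hi
      rw [hold j hj, hnew] at hij
      rcases h.out j hj with h' | h' <;> omega
    · omega
  -- `B₀` and `x` are the bin and the horizontal position chosen for the new item.
  obtain ⟨B₀, hB₀⟩ : ∃ B, B = (advPlace A n idx' m).1 := ⟨_, rfl⟩
  obtain ⟨x, hx⟩ : ∃ x, x = (advPlace A n idx' m).2.1 := ⟨_, rfl⟩
  have hcount : ∀ B, advCount A n idx' (m + 1) B =
      advCount A n idx m B + if B = B₀ then 1 else 0 := by
    intro B
    unfold advCount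
    have hf : ((Finset.range m).filter fun i => (advPlace A n idx' i).1 = B) =
        (Finset.range m).filter fun i => (advPlace A n idx i).1 = B := by
      apply Finset.filter_congr
      intro i hi
      rw [hplace i (Finset.mem_range.1 hi)]
    rw [Finset.range_add_one, Finset.filter_insert, hf, ← hB₀]
    by_cases hB : B₀ = B
    · rw [if_pos hB, if_pos hB.symm, Finset.card_insert_of_notMem (by simp)]
    · rw [if_neg hB, if_neg (Ne.symm hB), add_zero]
  obtain ⟨hval, hdis⟩ := advPlace_valid A hA n hn idx'
  -- Bins other than `B₀` keep their interval.
  have hslot_old : ∀ a' b', a ≤ a' → b' ≤ b → ∀ B, B ≠ B₀ → AdvSlot A n idx' (m + 1) a' b' B := by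
    intro a' b' ha' hb' B hB
    obtain ⟨p, q, hpq, hq, hp, hs⟩ := h.slot B
    refine ⟨p, q, hpq, ?_, ?_, ?_⟩
    · refine hq.imp_right fun ⟨i, hi, h1, h2, h3⟩ => ⟨i, by omega, ?_⟩
      rw [hplace i hi, hold i hi]
      exact ⟨h1, by omega, h3⟩
    · refine hp.imp_right fun ⟨i, hi, h1, h2, h3⟩ => ⟨i, by omega, ?_⟩
      rw [hplace i hi, hold i hi]
      exact ⟨h1, by omega, h3⟩
    · rw [hcount, if_neg hB, add_zero]; exact hs
  obtain ⟨p, q, hpq, hq, hp, hs⟩ := h.slot B₀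
  obtain ⟨x0, -, x1, -⟩ := (subset_unitBin_iff _ _ (Lfam_isValid n _ hn)).1 (hval m)
  rw [← hx] at x0 x1
  simp only [Lfam] at x1
  have hpx : p ≤ x := by
    rcases hp with hp | ⟨i, hi, h1, h2, h3⟩
    · linarith
    · have := geom_order n (idx' i) (idx' m) hn (hpos' m (by omega))
        (by rw [hold i hi, hnew]; omega) _ _ (hval i) (hval m)
        (hdis i m (by omega) (by rw [hplace i hi, h1, hB₀]))
      rw [hplace i hi, ← hx] at this
      linarith
  have hxq : x + 1 / (2 * n) ≤ q := by
    rcases hq with hq | ⟨i, hi, h1, h2, h3⟩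
    · linarith
    · have := geom_order n (idx' m) (idx' i) hn (hpos' i (by omega))
        (by rw [hold i hi, hnew]; omega) _ _ (hval m) (hval i)
        (hdis m i (by omega) (by rw [hplace i hi, h1, hB₀]))
      rw [hplace i hi, ← hx] at this
      linarith
  have hw : 2 * (n : ℝ) * (1 / (2 * n)) = 1 := by field_simp
  have hc0 : (0 : ℝ) ≤ 2 ^ advCount A n idx m B₀ := by positivity
  rcases le_total (2 * (2 * n * (x - p) + 1)) (2 * (n : ℝ) * (q - p) + 1) with hle | hle
  · -- The left part is short: continue with indices above `c`.
    refine ⟨idx', c, b, by omega, hpos', ?_, hinj', fun B => ?_⟩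
    · intro i hi
      rcases Nat.lt_succ_iff_lt_or_eq.1 hi with hi | rfl
      · rw [hold i hi]; exact (h.out i hi).imp_left fun h => by omega
      · omega
    by_cases hB : B = B₀
    · subst hB
      refine ⟨p, x, hpx, .inr ⟨m, by omega, hB₀.symm, hnew.le, hx.symm⟩, ?_, ?_⟩
      · refine hp.imp_right fun ⟨i, hi, h1, h2, h3⟩ => ⟨i, by omega, ?_⟩
        rw [hplace i hi, hold i hi]
        exact ⟨h1, h2, h3⟩
      · rw [hcount, if_pos rfl, pow_succ, mul_assoc]
        exact (mul_le_mul_of_nonneg_left hle hc0).trans hs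
    · exact hslot_old _ _ hac.le le_rfl B hB
  · -- Otherwise the right part is short: continue with indices below `c`.
    have hle' : 2 * (2 * n * (q - (x + 1 / (2 * n))) + 1) ≤ 2 * (n : ℝ) * (q - p) + 1 := by
      have e : 2 * (n : ℝ) * (q - (x + 1 / (2 * n))) = 2 * n * (q - x) - 1 := by
        rw [← sub_sub, mul_sub _ (q - x), hw]
      rw [e]
      linarith
    refine ⟨idx', a, c, by omega, hpos', ?_, hinj', fun B => ?_⟩
    · intro i hi
      rcases Nat.lt_succ_iff_lt_or_eq.1 hi with hi | rfl
      · rw [hold i hi]; exact (h.out i hi).imp_right fun h => by omega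
      · omega
    by_cases hB : B = B₀
    · subst hB
      refine ⟨x + 1 / (2 * n), q, hxq, ?_,
        .inr ⟨m, by omega, hB₀.symm, hnew.ge, by rw [hx]⟩, ?_⟩
      · refine hq.imp_right fun ⟨i, hi, h1, h2, h3⟩ => ⟨i, by omega, ?_⟩
        rw [hplace i hi, hold i hi]
        exact ⟨h1, h2, h3⟩
      · rw [hcount, if_pos rfl, pow_succ, mul_assoc]
        exact (mul_le_mul_of_nonneg_left hle' hc0).trans hs
    · exact hslot_old _ _ le_rfl hcb.le B hB

/-- Some sequence of `n` distinct members of `𝓛^n` makes `A` put at most `log₂(n+1)` items into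
each bin. -/
lemma exists_adversary (A : List LShape → ℕ × ℝ × ℝ)
    (hA : ∀ l : List LShape, (∀ L ∈ l, L.IsValid) → OnlinePacks A l)
    (n : ℕ) (hn : 2 ≤ n) :
    ∃ idx : ℕ → ℕ, (∀ i < n, 1 ≤ idx i) ∧ (∀ i < n, ∀ j < n, idx i = idx j → i = j) ∧
      ∀ B, advCount A n idx n B ≤ Nat.log 2 (n + 1) := by
  have hn0 : (0 : ℝ) < n := by exact_mod_cast (by omega : 0 < n)
  have main : ∀ m ≤ n, ∃ idx a b, AdvInv A n idx m a b := by
    intro m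
    induction m with
    | zero =>
      intro _
      refine ⟨fun _ => 0, 0, 2 ^ n, by simp, by simp, by simp, by simp, fun B => ?_⟩
      refine ⟨0, 1 / 2, by norm_num, .inl rfl, .inl rfl, ?_⟩
      simp only [advCount, Finset.range_zero, Finset.filter_empty, Finset.card_empty]
      linarith
    | succ m ih =>
      intro hm
      obtain ⟨idx, a, b, h⟩ := ih (by omega)
      exact adv_step A hA n hn idx m a b (by omega) h
  obtain ⟨idx, a, b, h⟩ := main n le_rfl
  refine ⟨idx, h.pos, h.inj, fun B => ?_⟩
  obtain ⟨p, q, hpq, -, -, hs⟩ := h.slot B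
  apply Nat.le_log_of_pow_le (by norm_num)
  have h1 : (1 : ℝ) ≤ 2 * n * (q - p) + 1 := by
    have : 0 ≤ 2 * (n : ℝ) * (q - p) := mul_nonneg (by positivity) (by linarith)
    linarith
  have h2 := (le_mul_of_one_le_right (by positivity) h1).trans hs
  exact_mod_cast h2

/-- for every deterministic online bin-packing algorithm for L-shapes and every
`n ≥ 2`, there is a sequence of `n` pairwise distinct L-shapes from `𝓛^n` that packs into a
single unit bin, but on which the algorithm uses at least `n / log₂(n+1)` bins. -/
theorem stmt4 (A : List LShape → ℕ × ℝ × ℝ)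
    (hA : ∀ l : List LShape, (∀ L ∈ l, L.IsValid) → OnlinePacks A l)
    (n : ℕ) (hn : 2 ≤ n) :
    ∃ idx : Fin n → ℕ, Function.Injective idx ∧ (∀ i, 1 ≤ idx i) ∧
      (∃ v : Fin n → ℝ × ℝ,
        (∀ i, planeTranslate (v i) (Lfam n (idx i)).toSet ⊆ unitBin) ∧
        ∀ i j, i ≠ j →
          Disjoint (interior (planeTranslate (v i) (Lfam n (idx i)).toSet))
                   (interior (planeTranslate (v j) (Lfam n (idx j)).toSet))) ∧
      (n : ℝ) / Real.logb 2 (n + 1) ≤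
        (binsUsed A (List.ofFn fun i => Lfam n (idx i)) : ℝ) := by
  obtain ⟨idx, hpos, hinj, hcnt⟩ := exists_adversary A hA n hn
  have hinj' : Function.Injective fun i : Fin n => idx i := fun i j hij =>
    Fin.ext (hinj i i.2 j j.2 hij)
  refine ⟨fun i => idx i, hinj', fun i => hpos i i.2, offline_packing n hn _ hinj', ?_⟩
  have hlist : (List.ofFn fun i : Fin n => Lfam n (idx i)) =
      (List.range n).map fun j => Lfam n (idx j) := by
    apply List.ext_getElem <;> simp
  have himg : binsUsed A ((List.range n).map fun j => Lfam n (idx j)) =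
      ((Finset.range n).image fun i => (advPlace A n idx i).1).card := by
    unfold binsUsed placeOf advPlace
    congr 1
    ext B
    simp only [Finset.mem_image, Finset.mem_univ, true_and, Finset.mem_range]
    constructor
    · rintro ⟨i, rfl⟩
      have hi : i.1 < n := by simpa using i.2
      exact ⟨i, hi, by rw [take_map_range _ _ _ hi]⟩
    · rintro ⟨i, hi, rfl⟩
      exact ⟨⟨i, by simpa using hi⟩, by rw [take_map_range _ _ _ hi]⟩
  have hcard : n ≤ Nat.log 2 (n + 1) *
      ((Finset.range n).image fun i => (advPlace A n idx i).1).card := by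
    have := Finset.card_le_mul_card_image (f := fun i => (advPlace A n idx i).1)
      (Finset.range n) (Nat.log 2 (n + 1)) (fun B _ => hcnt B)
    simpa using this
  rw [hlist, himg]
  have hlog : (Nat.log 2 (n + 1) : ℝ) ≤ Real.logb 2 (n + 1) := by
    simpa using Real.natLog_le_logb (n + 1) 2
  have hlogpos : 0 < Real.logb 2 (n + 1) :=
    Real.logb_pos (by norm_num) (by
      have : (2 : ℝ) ≤ n := by exact_mod_cast hn
      linarith)
  rw [div_le_iff₀ hlogpos, mul_comm]
  calc (n : ℝ) ≤ (Nat.log 2 (n + 1) : ℝ) *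
        (((Finset.range n).image fun i => (advPlace A n idx i).1).card : ℝ) := by
        exact_mod_cast hcard
    _ ≤ _ := by gcongr
end

section
/- There exists a deterministic online bin-packing algorithm A such that for every finite input sequence I of L-shapes that are symmetric (ℓx = ℓy and wx = wy) and large (ℓx = ℓy > 1/2), the number of bins used by A on I is at most 33·OPT(I) + 2. -/
/-- The items of `l` can be packed offline into `m` unit bins. -/
def OffPacks (l : List LShape) (m : ℕ) : Prop :=
  ∃ (bin : Fin l.length → ℕ) (v : Fin l.length → ℝ × ℝ),
    (∀ i, bin i < m) ∧
    (∀ i, planeTranslate (v i) (l.get i).toSet ⊆ unitBin) ∧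
    ∀ i j, i ≠ j → bin i = bin j →
      Disjoint (interior (planeTranslate (v i) (l.get i).toSet))
               (interior (planeTranslate (v j) (l.get j).toSet))

/-- The offline optimum: the minimum number of unit bins into which `l` can be packed. -/
noncomputable def OPT (l : List LShape) : ℕ := sInf {m | OffPacks l m}

/-! ### Online colouring of intervals -/

open Classical in
/-- Level of the `i`-th set of the sequence `S`: the least `k` such that every point of `S i` lies
in fewer than `k` of the earlier sets of level at most `k`. -/
noncomputable def lev (S : ℕ → Set ℝ) (i : ℕ) : ℕ :=
  sInf {k : ℕ | ∀ p ∈ S i,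
    ((Finset.range i).attach.filter fun j => lev S j.1 ≤ k ∧ p ∈ S j.1).card < k}
termination_by i
decreasing_by all_goals exact Finset.mem_range.1 (Subtype.property _)

open Classical in
/-- The sets before the `i`-th one which have level at most `k` and contain `p`. -/
noncomputable def before (S : ℕ → Set ℝ) (i k : ℕ) (p : ℝ) : Finset ℕ :=
  (Finset.range i).filter fun j => lev S j ≤ k ∧ p ∈ S j

lemma mem_before {S : ℕ → Set ℝ} {i k : ℕ} {p : ℝ} {j : ℕ} :
    j ∈ before S i k p ↔ j < i ∧ lev S j ≤ k ∧ p ∈ S j := by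
  simp [before]

lemma lev_eq (S : ℕ → Set ℝ) (i : ℕ) :
    lev S i = sInf {k : ℕ | ∀ p ∈ S i, (before S i k p).card < k} := by
  classical
  rw [lev]
  congr 1
  ext k
  refine forall₂_congr fun p _ => ?_
  have : before S i k p = (((Finset.range i).attach.filter
      fun j => lev S j.1 ≤ k ∧ p ∈ S j.1)).map (Function.Embedding.subtype _) := by
    ext j
    simp only [mem_before, Finset.mem_map, Finset.mem_filter, Finset.mem_attach, true_and,
      Function.Embedding.subtype_apply, Subtype.exists, Finset.mem_range]
    constructor
    · rintro ⟨h1, h2⟩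
      exact ⟨j, h1, h2, rfl⟩
    · rintro ⟨a, h1, h2, rfl⟩
      exact ⟨h1, h2⟩
  rw [this, Finset.card_map]

lemma lev_spec (S : ℕ → Set ℝ) (i : ℕ) {p : ℝ} (hp : p ∈ S i) :
    (before S i (lev S i) p).card < lev S i := by
  have hne : {k : ℕ | ∀ p ∈ S i, (before S i k p).card < k}.Nonempty := by
    refine ⟨i + 1, fun p _ => Nat.lt_succ_of_le ?_⟩
    have : before S i (i + 1) p ⊆ Finset.range i := fun j hj =>
      Finset.mem_range.2 (mem_before.1 hj).1
    simpa using Finset.card_le_card this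
  have := Nat.sInf_mem hne
  rw [← lev_eq] at this
  exact this p hp

/-- Minimality of the level: a nonempty set has a point already covered `lev - 1` times by
earlier sets of strictly smaller level. -/
lemma exists_witness (S : ℕ → Set ℝ) (i : ℕ) (hi : (S i).Nonempty) :
    ∃ p ∈ S i, lev S i ≤ (before S i (lev S i - 1) p).card + 1 := by
  obtain ⟨q, hq⟩ := hi
  have h0 : 0 < lev S i := lt_of_le_of_lt (Nat.zero_le _) (lev_spec S i hq)
  have h1 : lev S i - 1 ∉ {k : ℕ | ∀ p ∈ S i, (before S i k p).card < k} := by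
    apply Nat.notMem_of_lt_sInf
    rw [← lev_eq]
    omega
  simp only [Set.mem_ofPred_eq, not_forall, not_lt] at h1
  obtain ⟨p, hp, h⟩ := h1
  exact ⟨p, hp, by omega⟩

/-- A witness point of one set avoids every other set of the same level: otherwise the later of the
two sets would have been forced to a higher level. -/
lemma witness_notMem {S : ℕ → Set ℝ} {i j : ℕ} (hij : i ≠ j) (hl : lev S i = lev S j) {p : ℝ}
    (hp : p ∈ S i) (hw : lev S i ≤ (before S i (lev S i - 1) p).card + 1) : p ∉ S j := by
  intro hpj
  have h0 : 0 < lev S i := lt_of_le_of_lt (Nat.zero_le _) (lev_spec S i hp)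
  have key : ∀ m n, n < m → i ≤ m → lev S n = lev S i → lev S m = lev S i → p ∈ S n → p ∈ S m →
      False := by
    intro m n hnm him hn hm hpn hpm
    have hnot : n ∉ before S i (lev S i - 1) p := by
      rw [mem_before]; omega
    have hsub : insert n (before S i (lev S i - 1) p) ⊆ before S m (lev S m) p := by
      intro x hx
      rw [Finset.mem_insert] at hx
      rcases hx with rfl | hx
      · exact mem_before.2 ⟨hnm, by omega, hpn⟩
      · obtain ⟨h1, h2, h3⟩ := mem_before.1 hx
        exact mem_before.2 ⟨by omega, by omega, h3⟩
    have hc := Finset.card_le_card hsub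
    rw [Finset.card_insert_of_notMem hnot] at hc
    have := lev_spec S m hpm
    omega
  rcases lt_or_gt_of_ne hij with h | h
  · exact key j i h h.le rfl hl.symm hp hpj
  · exact key i j h le_rfl hl.symm rfl hpj hp

/-- Greedy colour of the `i`-th set: the least one not used by an earlier set of the same level
which meets it. -/
noncomputable def col (S : ℕ → Set ℝ) (i : ℕ) : ℕ :=
  sInf {c : ℕ | ∀ j : Fin i, lev S j.1 = lev S i → (S j.1 ∩ S i).Nonempty → col S j.1 ≠ c}
termination_by i
decreasing_by exact j.2

lemma col_eq (S : ℕ → Set ℝ) (i : ℕ) :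
    col S i = sInf {c : ℕ | ∀ j < i, lev S j = lev S i → (S j ∩ S i).Nonempty → col S j ≠ c} := by
  rw [col]
  congr 1
  ext c
  exact ⟨fun h j hj => h ⟨j, hj⟩, fun h j => h j.1 j.2⟩

lemma col_ne {S : ℕ → Set ℝ} {i j : ℕ} (hj : j < i) (hl : lev S j = lev S i)
    (h : (S j ∩ S i).Nonempty) : col S j ≠ col S i := by
  have hne : {c : ℕ | ∀ j < i, lev S j = lev S i → (S j ∩ S i).Nonempty → col S j ≠ c}.Nonempty := by
    refine ⟨(Finset.range i).sup (col S) + 1, fun j hj _ _ => ?_⟩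
    have := Finset.le_sup (f := col S) (Finset.mem_range.2 hj)
    omega
  have := Nat.sInf_mem hne
  rw [← col_eq] at this
  exact this j hj hl h

lemma disjoint_of_lev_col {S : ℕ → Set ℝ} {i j : ℕ} (hij : i ≠ j) (hl : lev S i = lev S j)
    (hc : col S i = col S j) : Disjoint (S i) (S j) := by
  rw [Set.disjoint_iff_inter_eq_empty]
  by_contra h
  rw [← ne_eq, ← Set.nonempty_iff_ne_empty] at h
  rcases lt_or_gt_of_ne hij with h' | h'
  · exact col_ne h' hl h hc
  · exact col_ne h' hl.symm (by rwa [Set.inter_comm]) hc.symm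

/-- Among intervals `I, J, K` whose witness points `x, y, z` are private, `J` and `K` cannot both
meet `I` from the left. -/
lemma no_two_left {I J K : Set ℝ} (hI : I.OrdConnected) (hJ : J.OrdConnected)
    (hK : K.OrdConnected) {x y z : ℝ} (hx : x ∈ I) (hy : y ∈ J) (hz : z ∈ K)
    (hyI : y ∉ I) (hzI : z ∉ I) (hyK : y ∉ K) (hzJ : z ∉ J)
    (hJI : (J ∩ I).Nonempty) (hKI : (K ∩ I).Nonempty) (hyx : y < x) (hzx : z < x) : False := by
  obtain ⟨a, haJ, haI⟩ := hJI
  obtain ⟨b, hbK, hbI⟩ := hKI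
  have ha : z < a := by
    by_contra! h
    exact hzI (hI.out haI hx ⟨h, hzx.le⟩)
  have hb : y < b := by
    by_contra! h
    exact hyI (hI.out hbI hx ⟨h, hyx.le⟩)
  rcases le_total y z with h | h
  · exact hzJ (hJ.out hy haJ ⟨h, ha.le⟩)
  · exact hyK (hK.out hz hbK ⟨h, hb.le⟩)

lemma no_two_right {I J K : Set ℝ} (hI : I.OrdConnected) (hJ : J.OrdConnected)
    (hK : K.OrdConnected) {x y z : ℝ} (hx : x ∈ I) (hy : y ∈ J) (hz : z ∈ K)
    (hyI : y ∉ I) (hzI : z ∉ I) (hyK : y ∉ K) (hzJ : z ∉ J)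
    (hJI : (J ∩ I).Nonempty) (hKI : (K ∩ I).Nonempty) (hyx : x < y) (hzx : x < z) : False := by
  obtain ⟨a, haJ, haI⟩ := hJI
  obtain ⟨b, hbK, hbI⟩ := hKI
  have ha : a < z := by
    by_contra! h
    exact hzI (hI.out hx haI ⟨hzx.le, h⟩)
  have hb : b < y := by
    by_contra! h
    exact hyI (hI.out hx hbI ⟨hyx.le, h⟩)
  rcases le_total y z with h | h
  · exact hyK (hK.out hbK hz ⟨hb.le, h⟩)
  · exact hzJ (hJ.out haJ hy ⟨ha.le, h⟩)

/-- Three colours suffice on every level, since an interval meets at most two others of its level: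
at most one on each side of its witness point. -/
lemma col_lt_three {S : ℕ → Set ℝ} (hS : ∀ i, (S i).OrdConnected) (i : ℕ) : col S i < 3 := by
  by_contra! hcon
  have hex : ∀ c < 3, ∃ j < i, lev S j = lev S i ∧ (S j ∩ S i).Nonempty ∧ col S j = c := by
    intro c hc
    have : c ∉ {c : ℕ | ∀ j < i, lev S j = lev S i → (S j ∩ S i).Nonempty → col S j ≠ c} := by
      apply Nat.notMem_of_lt_sInf
      rw [← col_eq]
      omega
    simp only [Set.mem_ofPred_eq, not_forall, not_not] at this
    obtain ⟨j, h1, h2, h3, h4⟩ := this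
    exact ⟨j, h1, h2, h3, h4⟩
  obtain ⟨a, ha, hal, han, hac⟩ := hex 0 (by norm_num)
  obtain ⟨b, hb, hbl, hbn, hbc⟩ := hex 1 (by norm_num)
  obtain ⟨c, hc, hcl, hcn, hcc⟩ := hex 2 (by norm_num)
  have hab : a ≠ b := by rintro rfl; omega
  have hac' : a ≠ c := by rintro rfl; omega
  have hbc' : b ≠ c := by rintro rfl; omega
  obtain ⟨x, hx, hxw⟩ := exists_witness S i (han.mono Set.inter_subset_right)
  obtain ⟨pa, hpa, hpaw⟩ := exists_witness S a (han.mono Set.inter_subset_left)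
  obtain ⟨pb, hpb, hpbw⟩ := exists_witness S b (hbn.mono Set.inter_subset_left)
  obtain ⟨pc, hpc, hpcw⟩ := exists_witness S c (hcn.mono Set.inter_subset_left)
  have hpai := witness_notMem ha.ne hal hpa hpaw
  have hpbi := witness_notMem hb.ne hbl hpb hpbw
  have hpci := witness_notMem hc.ne hcl hpc hpcw
  have hpab := witness_notMem hab (hal.trans hbl.symm) hpa hpaw
  have hpba := witness_notMem hab.symm (hbl.trans hal.symm) hpb hpbw
  have hpac := witness_notMem hac' (hal.trans hcl.symm) hpa hpaw
  have hpca := witness_notMem hac'.symm (hcl.trans hal.symm) hpc hpcw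
  have hpbc := witness_notMem hbc' (hbl.trans hcl.symm) hpb hpbw
  have hpcb := witness_notMem hbc'.symm (hcl.trans hbl.symm) hpc hpcw
  have ea : pa ≠ x := fun h => hpai (h ▸ hx)
  have eb : pb ≠ x := fun h => hpbi (h ▸ hx)
  have ec : pc ≠ x := fun h => hpci (h ▸ hx)
  rcases lt_or_gt_of_ne ea with h1 | h1 <;> rcases lt_or_gt_of_ne eb with h2 | h2
  · exact no_two_left (hS i) (hS a) (hS b) hx hpa hpb hpai hpbi hpab hpba han hbn h1 h2
  · rcases lt_or_gt_of_ne ec with h3 | h3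
    · exact no_two_left (hS i) (hS a) (hS c) hx hpa hpc hpai hpci hpac hpca han hcn h1 h3
    · exact no_two_right (hS i) (hS b) (hS c) hx hpb hpc hpbi hpci hpbc hpcb hbn hcn h2 h3
  · rcases lt_or_gt_of_ne ec with h3 | h3
    · exact no_two_left (hS i) (hS b) (hS c) hx hpb hpc hpbi hpci hpbc hpcb hbn hcn h2 h3
    · exact no_two_right (hS i) (hS a) (hS c) hx hpa hpc hpai hpci hpac hpca han hcn h1 h3
  · exact no_two_right (hS i) (hS a) (hS b) hx hpa hpb hpai hpbi hpab hpba han hbn h1 h2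

open Classical in
/-- If no point lies in more than `M` of the first `n` sets, then levels do not exceed `M`. -/
lemma lev_le {S : ℕ → Set ℝ} {n M : ℕ}
    (hM : ∀ p, ((Finset.range n).filter fun j => p ∈ S j).card ≤ M) {i : ℕ} (hi : i < n)
    (hne : (S i).Nonempty) : lev S i ≤ M := by
  obtain ⟨p, hp, hw⟩ := exists_witness S i hne
  refine hw.trans (le_trans ?_ (hM p))
  have hnot : i ∉ before S i (lev S i - 1) p := fun h => lt_irrefl _ (mem_before.1 h).1
  rw [← Finset.card_insert_of_notMem hnot]
  apply Finset.card_le_card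
  intro j hj
  rw [Finset.mem_insert] at hj
  rw [Finset.mem_filter, Finset.mem_range]
  rcases hj with rfl | hj
  · exact ⟨hi, hp⟩
  · obtain ⟨h1, -, h3⟩ := mem_before.1 hj
    exact ⟨h1.trans hi, h3⟩

lemma lev_congr {S T : ℕ → Set ℝ} (i : ℕ) (h : ∀ j ≤ i, S j = T j) : lev S i = lev T i := by
  induction i using Nat.strong_induction_on with
  | _ i ih =>
    rw [lev_eq, lev_eq, h i le_rfl]
    have : ∀ k p, before S i k p = before T i k p := by
      intro k p
      ext j
      simp only [mem_before]
      refine and_congr_right fun hj => ?_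
      rw [ih j hj fun m hm => h m (hm.trans hj.le), h j hj.le]
    simp only [this]

lemma col_congr {S T : ℕ → Set ℝ} (i : ℕ) (h : ∀ j ≤ i, S j = T j) : col S i = col T i := by
  induction i using Nat.strong_induction_on with
  | _ i ih =>
    rw [col_eq, col_eq, lev_congr i h, h i le_rfl]
    congr 1
    ext c
    refine forall₂_congr fun j hj => ?_
    rw [ih j hj fun m hm => h m (hm.trans hj.le), lev_congr j fun m hm => h m (hm.trans hj.le),
      h j hj.le]

/-! ### Geometry of large symmetric L-shapes -/

/-- The class of L-shapes under consideration. -/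
def LShape.Good (L : LShape) : Prop :=
  L.IsValid ∧ L.lx = L.ly ∧ L.wx = L.wy ∧ 1 / 2 < L.lx

/-- How far the reference point of a symmetric L-shape can move inside the unit bin, in each
coordinate. -/
def LShape.slack (L : LShape) : ℝ := 1 - L.lx

lemma translate_subset_bin {L : LShape} (hL : L.Good) {s : ℝ} (h0 : 0 ≤ s) (h1 : s ≤ L.slack) :
    planeTranslate (s, s) L.toSet ⊆ unitBin := by
  obtain ⟨⟨h2, h3, h4, h5, h6, h7⟩, h8, h9, h10⟩ := hL
  unfold LShape.slack at h1
  rintro _ ⟨⟨x, y⟩, hxy, rfl⟩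
  simp only [LShape.toSet, Set.mem_union, Set.mem_Icc, Prod.mk_le_mk] at hxy
  simp only [unitBin, Set.mem_Icc, Prod.mk_add_mk, Prod.mk_le_mk]
  rcases hxy with ⟨⟨a, b⟩, c, d⟩ | ⟨⟨a, b⟩, c, d⟩ <;>
    exact ⟨⟨by linarith, by linarith⟩, by linarith, by linarith⟩

/-- L-shapes with reference points on the diagonal are disjoint as soon as their corner squares
are. -/
lemma diagonal_disjoint {L M : LShape} (hL : L.Good) {s t : ℝ}
    (h : s + L.wx ≤ t) : Disjoint (interior (planeTranslate (s, s) L.toSet))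
      (interior (planeTranslate (t, t) M.toSet)) := by
  obtain ⟨-, -, h9, -⟩ := hL
  have hM : interior (planeTranslate (t, t) M.toSet) ⊆ Set.Ioi t ×ˢ Set.Ioi t := by
    rw [← interior_Ici, ← interior_prod_eq]
    apply interior_mono
    rintro _ ⟨⟨x, y⟩, hxy, rfl⟩
    simp only [LShape.toSet, Set.mem_union, Set.mem_Icc, Prod.mk_le_mk] at hxy
    simp only [Set.mem_prod, Set.mem_Ici, Prod.mk_add_mk]
    rcases hxy with ⟨⟨a, b⟩, c, d⟩ | ⟨⟨a, b⟩, c, d⟩ <;> exact ⟨by linarith, by linarith⟩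
  rw [Set.disjoint_left]
  intro q hq hq'
  obtain ⟨h1, h2⟩ := hM hq'
  obtain ⟨⟨x, y⟩, hxy, rfl⟩ := interior_subset hq
  simp only [LShape.toSet, Set.mem_union, Set.mem_Icc, Prod.mk_le_mk] at hxy
  simp only [Set.mem_Ioi, Prod.mk_add_mk] at h1 h2
  rcases hxy with ⟨⟨a, b⟩, c, d⟩ | ⟨⟨a, b⟩, c, d⟩ <;> linarith

lemma abscissa_bounds {L : LShape} (hL : L.Good) {v : ℝ × ℝ}
    (h : planeTranslate v L.toSet ⊆ unitBin) :
    0 ≤ v.1 ∧ v.1 ≤ L.slack ∧ 0 ≤ v.2 ∧ v.2 ≤ L.slack := by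
  obtain ⟨⟨h2, h3, h4, h5, h6, h7⟩, h8, h9, h10⟩ := hL
  have a1 := h ⟨(L.lx, 0), Or.inl ⟨⟨by linarith, le_rfl⟩, ⟨le_rfl, h5⟩⟩, rfl⟩
  have a2 := h ⟨(0, L.ly), Or.inr ⟨⟨le_rfl, by simp; linarith⟩, ⟨by simpa, le_rfl⟩⟩, rfl⟩
  obtain ⟨v1, v2⟩ := v
  simp only [unitBin, Set.mem_Icc, Prod.mk_add_mk, Prod.mk_le_mk] at a1 a2
  simp only [LShape.slack]
  exact ⟨by linarith, by linarith, by linarith, by linarith⟩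

/-- In a packing, the vertical arms of large L-shapes all cross the line `y = 1/2`, hence have
disjoint projections to the first axis. -/
lemma abscissa_disjoint {L M : LShape} (hL : L.Good) (hM : M.Good) {v v' : ℝ × ℝ}
    (h : planeTranslate v L.toSet ⊆ unitBin) (h' : planeTranslate v' M.toSet ⊆ unitBin)
    (hd : Disjoint (interior (planeTranslate v L.toSet))
      (interior (planeTranslate v' M.toSet))) (hLw : 0 < L.wx) (hMw : 0 < M.wx) :
    v.1 + L.wx ≤ v'.1 ∨ v'.1 + M.wx ≤ v.1 := by
  have arm : ∀ {N : LShape}, N.Good → ∀ {u : ℝ × ℝ}, planeTranslate u N.toSet ⊆ unitBin →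
      ∀ x, u.1 < x → x < u.1 + N.wx → (x, (1 / 2 : ℝ)) ∈ interior (planeTranslate u N.toSet) := by
    intro N hN u hu x hx1 hx2
    obtain ⟨b1, b2, b3, b4⟩ := abscissa_bounds hN hu
    obtain ⟨-, h8, -, h10⟩ := hN
    unfold LShape.slack at b2 b4
    have hopen : IsOpen (Set.Ioo u.1 (u.1 + N.wx) ×ˢ Set.Ioo u.2 (u.2 + N.ly)) :=
      isOpen_Ioo.prod isOpen_Ioo
    refine interior_maximal ?_ hopen ⟨⟨hx1, hx2⟩, ⟨by simp only; linarith, by simp only; linarith⟩⟩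
    rintro ⟨a, b⟩ ⟨⟨ha1, ha2⟩, hb1, hb2⟩
    simp only at ha1 ha2 hb1 hb2
    refine ⟨(a - u.1, b - u.2), Or.inr ⟨⟨?_, ?_⟩, ⟨?_, ?_⟩⟩, ?_⟩ <;>
      first
        | (simp only; linarith)
        | (ext <;> simp)
  by_contra! hcon
  obtain ⟨c1, c2⟩ := hcon
  obtain ⟨x, hx1, hx2⟩ : ∃ x, max v.1 v'.1 < x ∧ x < min (v.1 + L.wx) (v'.1 + M.wx) := by
    apply exists_between
    rw [max_lt_iff, lt_min_iff, lt_min_iff]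
    exact ⟨⟨by linarith, c2⟩, c1, by linarith⟩
  rw [max_lt_iff] at hx1
  rw [lt_min_iff] at hx2
  exact Set.disjoint_left.1 hd (arm hL h x hx1.1 hx2.1) (arm hM h' x hx1.2 hx2.2)

lemma sum_le_of_disjoint {ι : Type*} (F : Finset ι) (s w : ι → ℝ) {B : ℝ} (hB : 0 ≤ B)
    (hw : ∀ i ∈ F, 0 ≤ w i) (h0 : ∀ i ∈ F, 0 ≤ s i) (h1 : ∀ i ∈ F, s i + w i ≤ B)
    (hd : ∀ i ∈ F, ∀ j ∈ F, i ≠ j → s i + w i ≤ s j ∨ s j + w j ≤ s i) :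
    ∑ i ∈ F, w i ≤ B := by
  have hdis : (F : Set ι).PairwiseDisjoint fun i => Set.Ioo (s i) (s i + w i) := by
    intro i hi j hj hij
    rw [Function.onFun, Set.disjoint_left]
    rintro x ⟨hx1, hx2⟩ ⟨hx3, hx4⟩
    rcases hd i hi j hj hij with h | h <;> linarith
  have hvol := MeasureTheory.measure_biUnion_finset (μ := MeasureTheory.volume) hdis
    fun i _ => measurableSet_Ioo
  have hsub : (⋃ i ∈ F, Set.Ioo (s i) (s i + w i)) ⊆ Set.Icc 0 B := by
    intro x hx
    simp only [Set.mem_iUnion] at hx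
    obtain ⟨i, hi, hx1, hx2⟩ := hx
    exact ⟨(h0 i hi).trans hx1.le, hx2.le.trans (h1 i hi)⟩
  have hle := MeasureTheory.measure_mono (μ := MeasureTheory.volume) hsub
  rw [hvol] at hle
  simp only [Real.volume_Ioo, Real.volume_Icc, add_sub_cancel_left, sub_zero] at hle
  rw [← ENNReal.ofReal_sum_of_nonneg hw] at hle
  exact (ENNReal.ofReal_le_ofReal_iff hB).1 hle

/-! ### The online algorithm -/

/-- Big items: the width exceeds a quarter of the slack. -/
def LShape.IsBig (L : LShape) : Prop := L.slack < 4 * L.wx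

/-- Small items: the width is positive and at most a quarter of the slack. -/
def LShape.IsSmall (L : LShape) : Prop := 0 < L.wx ∧ 4 * L.wx ≤ L.slack

/-- The part of the diagonal (in either coordinate) occupied by a big item placed as far as
possible; empty for items which are not big. -/
def LShape.span (L : LShape) : Set ℝ := {p | L.IsBig ∧ L.slack ≤ p ∧ p < L.slack + L.wx}

/-- Dyadic class of a positive slack: the `k` with `2^(-k-1) < slack ≤ 2^(-k)`. -/
noncomputable def LShape.cls (L : LShape) : ℕ :=
  Classical.epsilon fun k : ℕ => (1 / 2 : ℝ) ^ (k + 1) < L.slack ∧ L.slack ≤ (1 / 2) ^ k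

open Classical in
/-- Total width of the small items of class `k` among the first `i` items. -/
noncomputable def vol (X : ℕ → LShape) (k i : ℕ) : ℝ :=
  ∑ j ∈ (Finset.range i).filter (fun j => (X j).IsSmall ∧ (X j).cls = k), (X j).wx

/-- Bin number (among the bins for small items) of a small item: the small items of class `k` are
laid out consecutively on a half-line, which is cut into pieces of length `2^(-k) / 8`. -/
noncomputable def smallBin (X : ℕ → LShape) (i : ℕ) : ℕ :=
  ⌊vol X (X i).cls i / ((1 / 2) ^ (X i).cls / 8)⌋₊

open Classical in
/-- Bin of the `i`-th item. Odd bins hold big items, even bins the others. -/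
noncomputable def binOf (X : ℕ → LShape) (i : ℕ) : ℕ :=
  if (X i).IsBig then 2 * (3 * lev (fun j => (X j).span) i + col (fun j => (X j).span) i) + 1
  else if (X i).IsSmall then 2 * smallBin X i else 0

open Classical in
/-- Both coordinates of the reference point of the `i`-th item. Small items of class `k` start in
`[3/8 * 2^(-k), 1/2 * 2^(-k))`. -/
noncomputable def startOf (X : ℕ → LShape) (i : ℕ) : ℝ :=
  if (X i).IsBig then (X i).slack
  else if (X i).IsSmall then
    3 / 8 * (1 / 2) ^ (X i).cls +
      (vol X (X i).cls i - smallBin X i * ((1 / 2) ^ (X i).cls / 8))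
  else 0

/-- The list as an infinite sequence, padded by a default item. -/
def ext (l : List LShape) (i : ℕ) : LShape := l.getD i ⟨0, 0, 0, 0⟩

/-- The online algorithm: place the last item of the list. -/
noncomputable def alg (l : List LShape) : ℕ × ℝ × ℝ :=
  (binOf (ext l) (l.length - 1), startOf (ext l) (l.length - 1), startOf (ext l) (l.length - 1))

lemma vol_congr {X Y : ℕ → LShape} (k i : ℕ) (h : ∀ j ≤ i, X j = Y j) : vol X k i = vol Y k i := by
  classical
  unfold vol
  rw [Finset.sum_filter, Finset.sum_filter]
  refine Finset.sum_congr rfl fun j hj => ?_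
  rw [h j (Finset.mem_range.1 hj).le]

lemma smallBin_congr {X Y : ℕ → LShape} (i : ℕ) (h : ∀ j ≤ i, X j = Y j) :
    smallBin X i = smallBin Y i := by
  unfold smallBin
  rw [vol_congr _ i h, h i le_rfl]

lemma binOf_congr {X Y : ℕ → LShape} (i : ℕ) (h : ∀ j ≤ i, X j = Y j) :
    binOf X i = binOf Y i := by
  have hs : ∀ j ≤ i, (fun j => (X j).span) j = (fun j => (Y j).span) j := fun j hj => by
    simp only [h j hj]
  unfold binOf
  rw [smallBin_congr i h, lev_congr i hs, col_congr i hs, h i le_rfl]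

lemma startOf_congr {X Y : ℕ → LShape} (i : ℕ) (h : ∀ j ≤ i, X j = Y j) :
    startOf X i = startOf Y i := by
  unfold startOf
  rw [smallBin_congr i h, vol_congr _ i h, h i le_rfl]

lemma placeOf_alg (l : List LShape) (i : Fin l.length) :
    placeOf alg l i = (binOf (ext l) i, startOf (ext l) i, startOf (ext l) i) := by
  have hlen : (l.take (i.1 + 1)).length - 1 = i.1 := by
    have := i.2
    rw [List.length_take]; omega
  have h : ∀ j ≤ i.1, ext (l.take (i.1 + 1)) j = ext l j := by
    intro j hj
    simp only [ext, List.getD_eq_getElem?_getD]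
    rw [List.getElem?_take_of_lt (by omega)]
  unfold placeOf alg
  rw [hlen, binOf_congr _ h, startOf_congr _ h]

lemma get_eq_ext (l : List LShape) (i : Fin l.length) : l.get i = ext l i := by
  simp [ext]

/-! ### The algorithm packs -/

lemma cls_spec {L : LShape} (h0 : 0 < L.slack) (h1 : L.slack ≤ 1) :
    (1 / 2 : ℝ) ^ (L.cls + 1) < L.slack ∧ L.slack ≤ (1 / 2) ^ L.cls :=
  Classical.epsilon_spec
    (exists_nat_pow_near_of_lt_one h0 h1 (by norm_num : (0 : ℝ) < 1 / 2) (by norm_num))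

lemma LShape.Good.slack_nonneg {L : LShape} (h : L.Good) : 0 ≤ L.slack := by
  have := h.1.2.2.1
  unfold LShape.slack; linarith

lemma LShape.Good.slack_le_one {L : LShape} (h : L.Good) : L.slack ≤ 1 := by
  have := h.2.2.2
  unfold LShape.slack; linarith

lemma LShape.IsSmall.cls_spec {L : LShape} (hs : L.IsSmall) (h : L.Good) :
    (1 / 2 : ℝ) ^ L.cls / 2 < L.slack ∧ L.slack ≤ (1 / 2) ^ L.cls := by
  obtain ⟨h1, h2⟩ := hs
  have := _root_.cls_spec (by linarith) h.slack_le_one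
  rw [pow_succ] at this
  exact ⟨by linarith [this.1], this.2⟩

lemma vol_nonneg (X : ℕ → LShape) (k i : ℕ) : 0 ≤ vol X k i := by
  classical
  exact Finset.sum_nonneg fun j hj => (Finset.mem_filter.1 hj).2.1.1.le

lemma vol_mono (X : ℕ → LShape) (k : ℕ) {i j : ℕ} (h : i ≤ j) : vol X k i ≤ vol X k j := by
  classical
  refine Finset.sum_le_sum_of_subset_of_nonneg ?_ fun m hm _ => (Finset.mem_filter.1 hm).2.1.1.le
  exact Finset.filter_subset_filter _ (Finset.range_mono h)

lemma vol_succ {X : ℕ → LShape} {i : ℕ} (hi : (X i).IsSmall) :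
    vol X (X i).cls (i + 1) = vol X (X i).cls i + (X i).wx := by
  classical
  unfold vol
  rw [Finset.sum_filter, Finset.sum_range_succ, ← Finset.sum_filter, if_pos ⟨hi, rfl⟩]

/-- A small item of class `k` keeps within `[3/8 * 2^(-k), 3/4 * 2^(-k)]`; these ranges do not
overlap for different `k`. -/
lemma small_start {X : ℕ → LShape} {i : ℕ} (hs : (X i).IsSmall) (hb : ¬ (X i).IsBig) :
    3 / 8 * (1 / 2) ^ (X i).cls ≤ startOf X i ∧ startOf X i ≤ (1 / 2) ^ (X i).cls / 2 := by
  have hpos : (0 : ℝ) < (1 / 2) ^ (X i).cls / 8 := by positivity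
  have h1 := Nat.floor_le (div_nonneg (vol_nonneg X (X i).cls i) hpos.le)
  have h2 := Nat.lt_floor_add_one (vol X (X i).cls i / ((1 / 2) ^ (X i).cls / 8))
  rw [le_div_iff₀ hpos] at h1
  rw [div_lt_iff₀ hpos, add_mul] at h2
  rw [startOf, if_neg hb, if_pos hs, smallBin]
  exact ⟨by linarith, by linarith⟩

lemma IsSmall.not_isBig {L : LShape} (h : L.IsSmall) : ¬ L.IsBig := not_lt.2 h.2

lemma startOf_mem {X : ℕ → LShape} {i : ℕ} (h : (X i).Good) :
    0 ≤ startOf X i ∧ startOf X i ≤ (X i).slack := by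
  by_cases hb : (X i).IsBig
  · rw [startOf, if_pos hb]
    exact ⟨h.slack_nonneg, le_rfl⟩
  by_cases hs : (X i).IsSmall
  · obtain ⟨h1, h2⟩ := small_start hs hb
    have hpos : (0 : ℝ) < (1 / 2) ^ (X i).cls := by positivity
    exact ⟨by linarith, by linarith [(hs.cls_spec h).1]⟩
  · rw [startOf, if_neg hb, if_neg hs]
    exact ⟨le_rfl, h.slack_nonneg⟩

lemma span_ordConnected (L : LShape) : L.span.OrdConnected :=
  ⟨fun _ hx _ hy _ hz => ⟨hx.1, hx.2.1.trans hz.1, hz.2.trans_lt hy.2.2⟩⟩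

lemma LShape.Good.span_nonempty {L : LShape} (h : L.Good) (hb : L.IsBig) : L.span.Nonempty :=
  ⟨L.slack, hb, le_rfl, by
    have := h.slack_nonneg
    unfold LShape.IsBig at hb
    linarith⟩

/-- Items sharing a bin occupy disjoint ranges on the diagonal. -/
lemma start_disjoint {X : ℕ → LShape} {i j : ℕ} (hij : i < j) (hi : (X i).Good) (hj : (X j).Good)
    (hbin : binOf X i = binOf X j) :
    startOf X i + (X i).wx ≤ startOf X j ∨ startOf X j + (X j).wx ≤ startOf X i := by
  by_cases bi : (X i).IsBig <;> by_cases bj : (X j).IsBig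
  · have ci := col_lt_three (S := fun j => (X j).span) (fun j => span_ordConnected _) i
    have cj := col_lt_three (S := fun j => (X j).span) (fun j => span_ordConnected _) j
    rw [binOf, binOf, if_pos bi, if_pos bj] at hbin
    have hd := disjoint_of_lev_col (S := fun j => (X j).span) hij.ne (by omega) (by omega)
    rw [startOf, startOf, if_pos bi, if_pos bj]
    rw [Set.disjoint_left] at hd
    by_contra! hcon
    obtain ⟨p, -, hp1, hp2⟩ := hi.span_nonempty bi
    obtain ⟨q, -, hq1, hq2⟩ := hj.span_nonempty bj
    have hmax : max (X i).slack (X j).slack < (X i).slack + (X i).wx :=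
      max_lt (by linarith) hcon.1
    have hmax' : max (X i).slack (X j).slack < (X j).slack + (X j).wx :=
      max_lt hcon.2 (by linarith)
    exact hd (a := max (X i).slack (X j).slack) ⟨bi, le_max_left _ _, hmax⟩
      ⟨bj, le_max_right _ _, hmax'⟩
  · rw [binOf, binOf, if_pos bi, if_neg bj] at hbin
    split_ifs at hbin
    all_goals omega
  · rw [binOf, binOf, if_neg bi, if_pos bj] at hbin
    split_ifs at hbin
    all_goals omega
  -- an item of width `0` starts at `0` and blocks nothing
  have zero : ∀ k, (X k).Good → ¬ (X k).IsBig → ¬ (X k).IsSmall → startOf X k + (X k).wx = 0 := by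
    intro k hk h1 h2
    rw [startOf, if_neg h1, if_neg h2]
    have := hk.1.1
    unfold LShape.IsBig at h1
    unfold LShape.IsSmall at h2
    by_contra h
    exact h2 ⟨lt_of_le_of_ne this (by intro h'; apply h; rw [← h', zero_add]), not_lt.1 h1⟩
  by_cases si : (X i).IsSmall
  swap
  · exact Or.inl (by rw [zero i hi bi si]; exact (startOf_mem hj).1)
  by_cases sj : (X j).IsSmall
  swap
  · exact Or.inr (by rw [zero j hj bj sj]; exact (startOf_mem hi).1)
  have hsb : smallBin X i = smallBin X j := by
    rw [binOf, binOf, if_neg bi, if_neg bj, if_pos si, if_pos sj] at hbin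
    omega
  have apart : ∀ m n, (X m).IsSmall → (X n).IsSmall → (X m).Good → (X m).cls > (X n).cls →
      startOf X m + (X m).wx ≤ startOf X n := by
    intro m n sm sn hm hlt
    have h1 := (small_start sm (IsSmall.not_isBig sm)).2
    have h2 := (small_start sn (IsSmall.not_isBig sn)).1
    have h3 := (sm.cls_spec hm).2
    have h4 := sm.2
    have h5 : (1 / 2 : ℝ) ^ (X m).cls ≤ (1 / 2) ^ ((X n).cls + 1) :=
      pow_le_pow_of_le_one (by norm_num) (by norm_num) hlt
    rw [pow_succ] at h5
    linarith
  rcases lt_trichotomy (X i).cls (X j).cls with hc | hc | hc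
  · exact Or.inr (apart j i sj si hj hc)
  · left
    have h1 := vol_succ si
    have h2 := vol_mono X (X i).cls (Nat.succ_le_of_lt hij)
    rw [startOf, startOf, if_neg bi, if_neg bj, if_pos si, if_pos sj, ← hsb, ← hc]
    rw [Nat.succ_eq_add_one] at h2
    linarith
  · exact Or.inl (apart i j si sj hi hc)

lemma alg_packs (l : List LShape) (hl : ∀ L ∈ l, L.Good) : OnlinePacks alg l := by
  have hg : ∀ i : Fin l.length, (ext l i).Good := fun i => by
    rw [← get_eq_ext]; exact hl _ (List.get_mem l i)
  refine ⟨fun i => ?_, fun i j hij hbin => ?_⟩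
  · rw [placeOf_alg, get_eq_ext]
    obtain ⟨h1, h2⟩ := startOf_mem (hg i)
    exact translate_subset_bin (hg i) h1 h2
  · rw [placeOf_alg, placeOf_alg] at *
    rw [get_eq_ext, get_eq_ext]
    have hij' : i.1 ≠ j.1 := fun h => hij (Fin.ext h)
    have : startOf (ext l) i + (ext l i).wx ≤ startOf (ext l) j ∨
        startOf (ext l) j + (ext l j).wx ≤ startOf (ext l) i := by
      rcases lt_or_gt_of_ne hij' with h | h
      · exact start_disjoint h (hg i) (hg j) hbin
      · exact (start_disjoint h (hg j) (hg i) hbin.symm).symm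
    rcases this with h | h
    · exact diagonal_disjoint (hg i) h
    · exact (diagonal_disjoint (hg j) h).symm

/-! ### Lower bounds on the optimum -/

lemma offPacks_OPT (l : List LShape) (hl : ∀ L ∈ l, L.Good) : OffPacks l (OPT l) := by
  refine Nat.sInf_mem (s := {m | OffPacks l m}) ⟨l.length, fun i => i.1, fun _ => (0, 0),
    fun i => i.2, fun i => ?_, fun i j hij h => absurd (Fin.ext h) hij⟩
  have := hl _ (List.get_mem l i)
  exact translate_subset_bin this le_rfl this.slack_nonneg

/-- One-dimensional shadow of an offline packing of the items `X 0, …, X (n-1)` into `m` bins: bins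
`b` and abscissae `s` such that items of positive width sharing a bin occupy disjoint ranges. -/
def Shadow (X : ℕ → LShape) (n m : ℕ) (b : ℕ → ℕ) (s : ℕ → ℝ) : Prop :=
  (∀ i < n, b i < m ∧ 0 ≤ s i ∧ s i ≤ (X i).slack) ∧
  ∀ i < n, ∀ j < n, i ≠ j → b i = b j → 0 < (X i).wx → 0 < (X j).wx →
    s i + (X i).wx ≤ s j ∨ s j + (X j).wx ≤ s i

lemma exists_shadow (l : List LShape) (hl : ∀ L ∈ l, L.Good) :
    ∃ b s, Shadow (ext l) l.length (OPT l) b s := by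
  obtain ⟨bin, v, h1, h2, h3⟩ := offPacks_OPT l hl
  have hg : ∀ i : Fin l.length, (ext l i).Good := fun i => by
    rw [← get_eq_ext]; exact hl _ (List.get_mem l i)
  simp only [get_eq_ext] at h2 h3
  refine ⟨fun i => if h : i < l.length then bin ⟨i, h⟩ else 0,
    fun i => if h : i < l.length then (v ⟨i, h⟩).1 else 0, fun i hi => ?_,
    fun i hi j hj hij hb wi wj => ?_⟩
  · simp only [hi, dite_true]
    obtain ⟨a, b, -, -⟩ := abscissa_bounds (hg ⟨i, hi⟩) (h2 ⟨i, hi⟩)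
    exact ⟨h1 _, a, b⟩
  · simp only [hi, hj, dite_true] at hb ⊢
    exact abscissa_disjoint (hg ⟨i, hi⟩) (hg ⟨j, hj⟩) (h2 ⟨i, hi⟩) (h2 ⟨j, hj⟩)
      (h3 ⟨i, hi⟩ ⟨j, hj⟩ (fun h => hij (congrArg Fin.val h)) hb) wi wj

/-- In an optimal bin, the small items of class `k` start before `2^(-k)` and have width at most
`2^(-k) / 4`, so their total width is at most `5/4 * 2^(-k)`. -/
lemma vol_le {X : ℕ → LShape} {n m : ℕ} {b : ℕ → ℕ} {s : ℕ → ℝ} (h : Shadow X n m b s)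
    (hg : ∀ i < n, (X i).Good) (k : ℕ) : vol X k n ≤ m * (5 / 4 * (1 / 2) ^ k) := by
  classical
  unfold vol
  rw [← Finset.sum_fiberwise_of_maps_to (t := Finset.range m) (g := b)
    (fun i hi => Finset.mem_range.2
      (h.1 i (Finset.mem_range.1 (Finset.mem_filter.1 hi).1)).1)]
  have hle : ∀ c ∈ Finset.range m, ∑ i ∈ ((Finset.range n).filter
      (fun j => (X j).IsSmall ∧ (X j).cls = k)).filter (fun i => b i = c), (X i).wx ≤
        5 / 4 * (1 / 2) ^ k := by
    intro c _
    have hmem : ∀ i ∈ ((Finset.range n).filter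
        (fun j => (X j).IsSmall ∧ (X j).cls = k)).filter (fun i => b i = c),
        i < n ∧ (X i).IsSmall ∧ (X i).cls = k ∧ b i = c := by
      intro i hi
      simp only [Finset.mem_filter, Finset.mem_range] at hi
      tauto
    apply sum_le_of_disjoint _ s
    · positivity
    · exact fun i hi => (hmem i hi).2.1.1.le
    · exact fun i hi => (h.1 i (hmem i hi).1).2.1
    · intro i hi
      obtain ⟨h1, h2, h3, -⟩ := hmem i hi
      have h4 := (h.1 i h1).2.2
      have h5 := (h2.cls_spec (hg i h1)).2
      have h6 := h2.2
      rw [h3] at h5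
      linarith
    · intro i hi j hj hij
      obtain ⟨h1, h2, -, h4⟩ := hmem i hi
      obtain ⟨h1', h2', -, h4'⟩ := hmem j hj
      exact h.2 i h1 j h1' hij (h4.trans h4'.symm) h2.1 h2'.1
  simpa using Finset.sum_le_sum hle

open Classical in
/-- Big items whose spans contain `p` have width more than `p / 5` and start before `p` in any
packing, so a bin holds at most five of them. -/
lemma span_card_le {X : ℕ → LShape} {n m : ℕ} {b : ℕ → ℕ} {s : ℕ → ℝ} (h : Shadow X n m b s)
    (hg : ∀ i < n, (X i).Good) (p : ℝ) :
    ((Finset.range n).filter fun j => p ∈ (X j).span).card ≤ 5 * m := by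
  have := Finset.card_le_mul_card_image_of_maps_to (f := b)
    (s := (Finset.range n).filter fun j => p ∈ (X j).span) (t := Finset.range m)
    (fun i hi => Finset.mem_range.2
      (h.1 i (Finset.mem_range.1 (Finset.mem_filter.1 hi).1)).1) 5 ?_
  · simpa using this
  intro c _
  set F := ((Finset.range n).filter fun j => p ∈ (X j).span).filter (fun i => b i = c) with hF
  have hmem : ∀ i ∈ F, i < n ∧ p ∈ (X i).span ∧ b i = c := by
    intro i hi
    simp only [hF, Finset.mem_filter, Finset.mem_range] at hi
    tauto
  rcases F.eq_empty_or_nonempty with he | hne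
  · simp [he]
  -- the least width `u` satisfies `p < 5 * u`
  obtain ⟨i₀, hi₀, hmin⟩ := Finset.exists_min_image F (fun i => (X i).wx) hne
  have pos : ∀ i ∈ F, 0 < (X i).wx := by
    intro i hi
    obtain ⟨h1, ⟨h2, -⟩, -⟩ := hmem i hi
    have := (hg i h1).slack_nonneg
    unfold LShape.IsBig at h2
    linarith
  set u := (X i₀).wx with hu
  have hu0 : 0 < u := pos i₀ hi₀
  have hp5 : p < 5 * u := by
    obtain ⟨-, ⟨h2, -, h3⟩, -⟩ := hmem i₀ hi₀
    unfold LShape.IsBig at h2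
    linarith
  have hp0 : 0 ≤ p := by
    obtain ⟨h1, ⟨-, h2, -⟩, -⟩ := hmem i₀ hi₀
    exact (hg i₀ h1).slack_nonneg.trans h2
  have hsum := sum_le_of_disjoint F s (fun _ => u) (B := p + u) (by linarith)
    (fun _ _ => hu0.le) (fun i hi => (h.1 i (hmem i hi).1).2.1)
    (fun i hi => by
      obtain ⟨h1, ⟨-, h2, -⟩, -⟩ := hmem i hi
      linarith [(h.1 i h1).2.2])
    (fun i hi j hj hij => by
      obtain ⟨h1, -, h3⟩ := hmem i hi
      obtain ⟨h1', -, h3'⟩ := hmem j hj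
      rcases h.2 i h1 j h1' hij (h3.trans h3'.symm) (pos i hi) (pos j hj) with h | h
      · exact Or.inl (by linarith [hmin i hi])
      · exact Or.inr (by linarith [hmin j hj]))
  rw [Finset.sum_const, nsmul_eq_mul] at hsum
  have hlt : (F.card : ℝ) < 6 := by
    by_contra! hcon
    nlinarith
  have : F.card < 6 := by exact_mod_cast hlt
  omega

lemma alg_bins (l : List LShape) (hl : ∀ L ∈ l, L.Good) :
    binsUsed alg l ≤ 25 * OPT l + 1 := by
  classical
  obtain ⟨b, s, hsh⟩ := exists_shadow l hl
  have hg : ∀ i < l.length, (ext l i).Good := fun i hi => by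
    have := get_eq_ext l ⟨i, hi⟩
    rw [← this]; exact hl _ (List.get_mem l _)
  set X := ext l
  set m := OPT l
  have hsub : ((Finset.univ : Finset (Fin l.length)).image fun i => (placeOf alg l i).1) ⊆
      (Finset.range (10 * m + 1)).image (fun t => 2 * t) ∪
        (Finset.Ico 3 (15 * m + 3)).image (fun t => 2 * t + 1) := by
    intro t ht
    obtain ⟨i, -, rfl⟩ := Finset.mem_image.1 ht
    have hi := hg i i.2
    rw [placeOf_alg, Finset.mem_union, Finset.mem_image, Finset.mem_image]
    change (∃ a ∈ _, 2 * a = binOf X i) ∨ ∃ a ∈ _, 2 * a + 1 = binOf X i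
    by_cases bi : (X i).IsBig
    · right
      rw [binOf, if_pos bi]
      have h1 := col_lt_three (S := fun j => (X j).span) (fun j => span_ordConnected _) i
      have h2 := lev_le (S := fun j => (X j).span) (n := l.length) (M := 5 * m)
        (fun p => span_card_le hsh hg p) i.2 (hi.span_nonempty bi)
      obtain ⟨q, hq⟩ := hi.span_nonempty bi
      have h3 := lev_spec (fun j => (X j).span) i hq
      exact ⟨_, Finset.mem_Ico.2 ⟨by omega, by omega⟩, rfl⟩
    left
    rw [binOf, if_neg bi]
    by_cases si : (X i).IsSmall
    · rw [if_pos si]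
      refine ⟨_, Finset.mem_range.2 (Nat.lt_succ_of_le ?_), rfl⟩
      have h1 := (vol_mono X (X i).cls i.2.le).trans (vol_le hsh hg (X i).cls)
      have hpos : (0 : ℝ) < (1 / 2) ^ (X i).cls / 8 := by positivity
      apply Nat.floor_le_of_le
      rw [div_le_iff₀ hpos]
      push_cast
      linarith
    · rw [if_neg si]
      exact ⟨0, by simp, rfl⟩
  refine (Finset.card_le_card hsub).trans ((Finset.card_union_le _ _).trans ?_)
  have h1 := Finset.card_image_le (s := Finset.range (10 * m + 1)) (f := fun t => 2 * t)
  have h2 := Finset.card_image_le (s := Finset.Ico 3 (15 * m + 3)) (f := fun t => 2 * t + 1)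
  rw [Finset.card_range] at h1
  rw [Nat.card_Ico] at h2
  omega

/-- there is a deterministic online bin-packing algorithm that, on every input
sequence of symmetric (`ℓx = ℓy`, `wx = wy`) and large (`ℓx = ℓy > 1/2`) L-shapes, produces
a valid packing using at most `33·OPT + 2` bins. -/
theorem stmt6 :
    ∃ A : List LShape → ℕ × ℝ × ℝ,
      ∀ l : List LShape,
        (∀ L ∈ l, L.IsValid ∧ L.lx = L.ly ∧ L.wx = L.wy ∧ 1 / 2 < L.lx) →
        OnlinePacks A l ∧ binsUsed A l ≤ 33 * OPT l + 2 := by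

  refine ⟨alg, fun l hl => ⟨alg_packs l hl, (alg_bins l hl).trans ?_⟩⟩
  omega
end
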